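/- arXiv:2212.10473 — 3 statements merged into one kernel-verified Lean document; each statement's English description precedes it below -/
import Mathlib

section
/- Let X and Y be Polish spaces, μ a Borel probability measure on X and ν a Borel probability measure on Y. Let F : Y → ℝ^d be a Borel measurable function integrable with respect to ν, set g(p) = ∫_Y F(y) p(dy), and let h : X × ℝ^d → ℝ be a Borel measurable function. Then the infimum of σ ↦ ∫_X h(x, g(σ^x)) μ(dx) over σ ∈ Π(μ,ν) is attained if and only if the infimum of T ↦ ∫_X h(x, T(x)) μ(dx) over all Borel measurable maps T : X → ℝ^d with μ∘T⁻¹ ≼_c ν∘F⁻¹ is attained. -/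
/-!
The point is that the maps `T` with `μ∘T⁻¹ ≼_c ν∘F⁻¹` are, up to `μ`-null sets, exactly the
barycenter maps `x ↦ ∫ F dσ^x` of couplings `σ ∈ Π(μ, ν)`. Both problems then have the same set of
values, and one infimum is attained if and only if the other is.

That barycenter maps are dominated is Jensen's inequality for the conditional measures
(`convexDom_map_integral_condKernel`).

The converse is a form of Strassen's theorem (`exists_coupling_of_convexDom`). Embed `X` measurably
by `e` into the Cantor space `C`, which is compact and whose Borel sets are generated by clopen
sets. The laws on `C × Y` with second marginal `ν` form a weakly compact set by Prokhorov's theorem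
(`isCompact_lawsWithSnd`), and the integrals of `1_A(c) (b + ℓ (F y))`, with `A` clopen and `ℓ`
linear, are continuous on it (`continuous_integral_indicator`). A law whose integrals equal those
of `1_A(e x) (b + ℓ (T x))` under `μ` has first marginal `μ∘e⁻¹` and barycenters `T`, so after
disintegration it pulls back to the desired coupling. By compactness only finitely many of these
equations need to be met at once (`exists_law`). If they could not be, the Hahn–Banach theorem
would give a function `L(c, u)`, affine in `u` and taking finitely many values in `c` for fixed `u`,
with `∫ L(e x, T x) dμ > ∫ L(c, F y) dσ` for all admissible `σ`. Testing the convex order on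
`φ u = max_c L(c, u)`, and choosing `c` to be a measurable maximizer at `u = F y`, contradicts this
(`exists_law_of_finset`).
-/

open MeasureTheory

noncomputable section

/-- The conditional measures `σ^x` of a probability measure `σ` on a product space with
respect to its first marginal, given by the disintegration `σ(dx dy) = σ^x(dy) μ(dx)`. -/
def condMeas {X Y : Type*} [MeasurableSpace X] [MeasurableSpace Y]
    [StandardBorelSpace Y] [Nonempty Y]
    (σ : ProbabilityMeasure (X × Y)) (x : X) : Measure Y :=
  (σ : Measure (X × Y)).condKernel x

/-- Convex dominance (convex order) `ζ ≼_c η` for Borel measures on a normed space: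
both measures have finite first moments and `∫ φ dζ ≤ ∫ φ dη` for every convex
function `φ` integrable with respect to `η`. -/
def ConvexDom {E : Type*} [NormedAddCommGroup E] [NormedSpace ℝ E] [MeasurableSpace E]
    (ζ η : Measure E) : Prop :=
  Integrable (fun u => ‖u‖) ζ ∧ Integrable (fun u => ‖u‖) η ∧
  ∀ φ : E → ℝ, ConvexOn ℝ Set.univ φ → Integrable φ η → ∫ u, φ u ∂ζ ≤ ∫ u, φ u ∂η

/-! ### Jensen: barycenter maps are dominated -/

lemma integrable_comp_snd {X Y E : Type*} [MeasurableSpace X] [MeasurableSpace Y]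
    [NormedAddCommGroup E] {σ : Measure (X × Y)} {f : Y → E} (hf : Integrable f σ.snd) :
    Integrable (fun z : X × Y => f z.2) σ :=
  hf.comp_measurable measurable_snd

/-- A convex function on a finite-dimensional space lies above a continuous affine function. -/
lemma exists_affine_minorant {E : Type*} [NormedAddCommGroup E] [NormedSpace ℝ E]
    [FiniteDimensional ℝ E] {φ : E → ℝ} (hφ : ConvexOn ℝ Set.univ φ) :
    ∃ (l : E →L[ℝ] ℝ) (c : ℝ), ∀ u, l u + c ≤ φ u := by
  have hc : ContinuousOn φ Set.univ := hφ.continuousOn isOpen_univ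
  obtain ⟨l, c, hl, -⟩ := ConvexOn.exists_affine_le_of_lt (𝕜 := ℝ) (Set.mem_univ (0 : E))
    (sub_one_lt (φ 0)) isClosed_univ hc.lowerSemicontinuousOn hφ
  exact ⟨l, c, fun u => by simpa using hl ⟨u, trivial⟩⟩

/-- The barycenters of the conditional measures of a coupling are dominated, in convex order, by
the image of the second marginal: this is Jensen's inequality for each conditional measure. -/
lemma convexDom_map_integral_condKernel {X Y E : Type*} [MeasurableSpace X] [MeasurableSpace Y]
    [StandardBorelSpace Y] [Nonempty Y]
    [NormedAddCommGroup E] [NormedSpace ℝ E] [FiniteDimensional ℝ E] [MeasurableSpace E]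
    [BorelSpace E] [SecondCountableTopology E] [CompleteSpace E]
    (σ : Measure (X × Y)) [IsProbabilityMeasure σ] {F : Y → E} (hFm : Measurable F)
    (hF : Integrable F σ.snd) :
    ConvexDom (σ.fst.map (fun x => ∫ y, F y ∂σ.condKernel x)) (σ.snd.map F) := by
  have hTm : Measurable (fun x => ∫ y, F y ∂σ.condKernel x) :=
    (hFm.stronglyMeasurable.integral_kernel (κ := σ.condKernel)).measurable
  have hFσ : Integrable (fun z : X × Y => F z.2) σ := integrable_comp_snd hF
  have hT : Integrable (fun x => ∫ y, F y ∂σ.condKernel x) σ.fst := hFσ.integral_condKernel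
  refine ⟨?_, ?_, fun φ hφ hφi => ?_⟩
  · rw [integrable_map_measure (by fun_prop) hTm.aemeasurable]
    exact hT.norm
  · rw [integrable_map_measure (by fun_prop) hFm.aemeasurable]
    exact hF.norm
  have hcont : Continuous φ := continuousOn_univ.1 (hφ.continuousOn isOpen_univ)
  rw [integrable_map_measure hcont.aestronglyMeasurable hFm.aemeasurable] at hφi
  rw [integral_map hTm.aemeasurable hcont.aestronglyMeasurable,
    integral_map hFm.aemeasurable hcont.aestronglyMeasurable]
  have hφσ : Integrable (fun z : X × Y => φ (F z.2)) σ := integrable_comp_snd hφi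
  have hle : ∀ᵐ x ∂σ.fst, φ (∫ y, F y ∂σ.condKernel x) ≤ ∫ y, φ (F y) ∂σ.condKernel x := by
    filter_upwards [hFσ.condKernel_ae, hφσ.condKernel_ae] with x h1 h2
    exact hφ.map_integral_le hcont.continuousOn isClosed_univ (by simp) h1 h2
  -- An affine minorant makes `φ` of the barycenter integrable, so that no integral below is junk.
  obtain ⟨l, c, hl⟩ := exists_affine_minorant hφ
  have hint : Integrable (fun x => φ (∫ y, F y ∂σ.condKernel x)) σ.fst :=
    integrable_of_le_of_le (hcont.measurable.comp hTm).aestronglyMeasurable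
      (Filter.Eventually.of_forall fun x => hl _) hle
      ((l.integrable_comp hT).add (integrable_const c)) hφσ.integral_condKernel
  calc _ ≤ ∫ x, ∫ y, φ (F y) ∂σ.condKernel x ∂σ.fst :=
        integral_mono_ae hint hφσ.integral_condKernel hle
    _ = ∫ z, φ (F z.2) ∂σ := Measure.integral_condKernel hφσ
    _ = ∫ y, φ (F y) ∂σ.snd := by
        rw [Measure.snd]
        exact (integral_map measurable_snd.aemeasurable
          (hcont.measurable.comp hFm).aestronglyMeasurable).symm

/-! ### Measurable selection and membership patterns -/

/-- Measurable selection of a maximizer among finitely many measurable functions. -/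
lemma exists_measurable_argmax {Z C : Type*} [MeasurableSpace Z] [MeasurableSpace C]
    (f : C → Z → ℝ) (hf : ∀ c, Measurable (f c)) (R : Finset C) (hR : R.Nonempty) :
    ∃ t : Z → C, Measurable t ∧ Measurable (fun z => f (t z) z) ∧
      ∀ c ∈ R, ∀ z, f c z ≤ f (t z) z := by
  classical
  induction hR using Finset.Nonempty.cons_induction with
  | singleton a => exact ⟨fun _ => a, measurable_const, hf a, by simp⟩
  | cons a s ha hs ih =>
    obtain ⟨t, ht, hft, hmax⟩ := ih
    have hset : MeasurableSet {z | f (t z) z ≤ f a z} := measurableSet_le hft (hf a)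
    refine ⟨fun z => if f (t z) z ≤ f a z then a else t z, Measurable.ite hset measurable_const ht,
      ?_, fun c hc z => ?_⟩
    · have : (fun z => f (if f (t z) z ≤ f a z then a else t z) z) =
          fun z => if f (t z) z ≤ f a z then f a z else f (t z) z := by
        ext z; split_ifs <;> rfl
      rw [this]
      exact Measurable.ite hset (hf a) hft
    · rcases Finset.mem_cons.1 hc with rfl | hc
      · dsimp only
        split_ifs with h
        · exact le_rfl
        · exact (not_le.1 h).le
      · dsimp only
        split_ifs with h
        · exact (hmax c hc z).trans h
        · exact hmax c hc z

/-- Finitely many sets have a finite set of points realising all membership patterns. -/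
lemma exists_finset_patterns {C ι : Type*} [Nonempty C] [Finite ι] (A : ι → Set C) :
    ∃ R : Finset C, R.Nonempty ∧ ∀ c, ∃ c' ∈ R, ∀ i, c ∈ A i ↔ c' ∈ A i := by
  classical
  have hfin : (Set.univ.image fun c : C => fun i => c ∈ A i).Finite := Set.toFinite _
  obtain ⟨R, -, hR⟩ := Set.exists_subset_bijOn (Set.univ : Set C) (fun c : C => fun i => c ∈ A i)
  have hRfin : R.Finite := hR.finite_iff_finite.2 hfin
  have key : ∀ c, ∃ c' ∈ hRfin.toFinset, ∀ i, c ∈ A i ↔ c' ∈ A i := fun c => by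
    obtain ⟨c', hc', h⟩ := hR.surjOn (Set.mem_image_of_mem _ (Set.mem_univ c))
    exact ⟨c', by simpa using hc', fun i => by simpa using (congrFun h i).symm⟩
  obtain ⟨c', hc', -⟩ := key (Classical.arbitrary C)
  exact ⟨hRfin.toFinset, ⟨c', hc'⟩, key⟩

/-! ### Weak compactness of the laws with a fixed marginal -/

/-- The set of laws on `C × Y` with second marginal `ν`. -/
def lawsWithSnd (C : Type*) {Y : Type*} [MeasurableSpace C] [MeasurableSpace Y] (ν : Measure Y) :
    Set (ProbabilityMeasure (C × Y)) :=
  {σ | (σ : Measure (C × Y)).snd = ν}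

lemma isCompact_lawsWithSnd {C Y : Type*} [MeasurableSpace C] [TopologicalSpace C] [BorelSpace C]
    [CompactSpace C] [PolishSpace C]
    [MeasurableSpace Y] [TopologicalSpace Y] [PolishSpace Y] [BorelSpace Y]
    (ν : Measure Y) [IsProbabilityMeasure ν] : IsCompact (lawsWithSnd C ν) := by
  let := TopologicalSpace.upgradeIsCompletelyMetrizable Y
  have hclosed : IsClosed (lawsWithSnd C ν) := by
    have h := ProbabilityMeasure.continuous_map (Ω := C × Y) (Ω' := Y) continuous_snd
    let ν' : ProbabilityMeasure Y := ⟨ν, inferInstance⟩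
    convert (isClosed_singleton (x := ν')).preimage h
    ext σ
    exact ⟨fun hσ => Subtype.ext hσ, fun hσ => congrArg Subtype.val hσ⟩
  have := isCompact_closure_of_isTightMeasureSet (S := lawsWithSnd C ν)
    (IsTightMeasureSet.prodMk .of_compactSpace
      ((isTightMeasureSet_singleton (μ := ν)).subset ?_))
  · rwa [hclosed.closure_eq] at this
  · rintro _ ⟨_, ⟨σ, hσ, rfl⟩, rfl⟩
    exact hσ

/-- On the laws with second marginal `ν`, integrating `1_A(c) f(y)` is weakly continuous for `A`
clopen and `f` merely `ν`-integrable: `f` is an `L¹(ν)`-limit of bounded continuous functions, and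
the approximation error depends on the law only through `ν`. -/
lemma continuous_integral_indicator {C Y : Type*} [MeasurableSpace C] [TopologicalSpace C]
    [BorelSpace C] [PolishSpace C]
    [MeasurableSpace Y] [TopologicalSpace Y] [PolishSpace Y] [BorelSpace Y]
    (ν : Measure Y) [IsProbabilityMeasure ν] {A : Set C} (hA : IsClopen A) {f : Y → ℝ}
    (hf : Integrable f ν) :
    Continuous fun σ : lawsWithSnd C ν =>
      ∫ z, A.indicator (fun _ => f z.2) z.1 ∂(σ.1 : Measure (C × Y)) := by
  let := TopologicalSpace.upgradeIsCompletelyMetrizable Y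
  have hind : ∀ g : Y → ℝ, (fun z : C × Y => A.indicator (fun _ => g z.2) z.1) =
      (Prod.fst ⁻¹' A).indicator (fun z => g z.2) := fun g => by
    ext z; rfl
  have hAm : MeasurableSet (Prod.fst ⁻¹' A : Set (C × Y)) :=
    measurable_fst hA.isOpen.measurableSet
  have hmk : ∀ (σ : lawsWithSnd C ν) {g : Y → ℝ}, Integrable g ν →
      Integrable (fun z : C × Y => g z.2) (σ.1 : Measure (C × Y)) := fun σ g hg => by
    rw [← σ.2] at hg
    exact integrable_comp_snd hg
  refine continuous_of_uniform_approx_of_continuous fun u hu => ?_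
  obtain ⟨ε, hε, hεu⟩ := Metric.mem_uniformity_dist.1 hu
  obtain ⟨g, hg, hgi⟩ := hf.exists_boundedContinuous_integral_sub_le (half_pos hε)
  refine ⟨fun σ => ∫ z, A.indicator (fun _ => g z.2) z.1 ∂(σ.1 : Measure (C × Y)), ?_,
    fun σ => hεu ?_⟩
  · let G : BoundedContinuousFunction (C × Y) ℝ :=
      BoundedContinuousFunction.ofNormedAddCommGroup
        (fun z => A.indicator (fun _ => g z.2) z.1)
        (by
          rw [hind]
          exact (g.continuous.comp continuous_snd).indicator (by
            rw [(hA.preimage continuous_fst).frontier_eq]; simp)) ‖g‖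
        (fun z => by
          refine (norm_indicator_le_norm_self _ _).trans (g.norm_coe_le_norm _))
    exact (ProbabilityMeasure.continuous_integral_boundedContinuousFunction G).comp
      continuous_subtype_val
  · simp only [hind]
    rw [dist_eq_norm, ← integral_sub ((hmk σ hf).indicator hAm) ((hmk σ hgi).indicator hAm)]
    have hb := (hmk σ (hf.sub hgi)).norm
    calc _ ≤ ∫ z, ‖f z.2 - g z.2‖ ∂(σ.1 : Measure (C × Y)) := by
          refine norm_integral_le_of_norm_le hb (Filter.Eventually.of_forall fun z => ?_)
          by_cases hz : z ∈ Prod.fst ⁻¹' A <;> simp [hz]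
      _ = ∫ y, ‖f y - g y‖ ∂ν := by
          have h := σ.2
          conv_rhs => rw [← show (σ.1 : Measure (C × Y)).snd = ν from h]
          rw [Measure.snd, integral_map measurable_snd.aemeasurable]
          have := (hf.sub hgi).norm.aestronglyMeasurable
          rw [← show (σ.1 : Measure (C × Y)).snd = ν from h] at this
          exact this
      _ < ε := by linarith

/-! ### Laws with prescribed integrals -/

/-- The function `(c, u) ↦ 1_A(c) (b + ℓ u)` attached to a clopen set `A`, a real `b` and a
continuous linear form `ℓ`. The integrals of such functions express both the first marginal of a
law on `C × Y` and the barycenters of its conditional measures. -/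
def cellTest {C E : Type*} [TopologicalSpace C] [NormedAddCommGroup E] [NormedSpace ℝ E]
    (i : {A : Set C // IsClopen A} × ℝ × (E →L[ℝ] ℝ)) (c : C) (u : E) : ℝ :=
  i.1.1.indicator (fun _ => i.2.1 + i.2.2 u) c

section CellTest

variable {C E : Type*} [TopologicalSpace C] [NormedAddCommGroup E] [NormedSpace ℝ E]
  (i : {A : Set C // IsClopen A} × ℝ × (E →L[ℝ] ℝ))

lemma abs_cellTest_le (c : C) (u : E) : |cellTest i c u| ≤ |i.2.1 + i.2.2 u| :=
  norm_indicator_le_norm_self (fun _ => i.2.1 + i.2.2 u) c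

lemma cellTest_affine (c : C) (u v : E) {a b : ℝ} (hab : a + b = 1) :
    cellTest i c (a • u + b • v) = a * cellTest i c u + b * cellTest i c v := by
  by_cases hc : c ∈ i.1.1
  · simp only [cellTest, Set.indicator_of_mem hc, map_add, map_smul, smul_eq_mul]
    linear_combination (-i.2.1) * hab
  · simp [cellTest, hc]

lemma measurable_cellTest [MeasurableSpace C] [BorelSpace C] [MeasurableSpace E] [BorelSpace E] :
    Measurable fun z : C × E => cellTest i z.1 z.2 := by
  have : (fun z : C × E => cellTest i z.1 z.2) =
      (Prod.fst ⁻¹' i.1.1).indicator fun z => i.2.1 + i.2.2 z.2 := by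
    ext z; rfl
  rw [this]
  exact Measurable.indicator (by fun_prop) (measurable_fst i.1.2.isOpen.measurableSet)

lemma integrable_cellTest [MeasurableSpace C] [BorelSpace C] [MeasurableSpace E] [BorelSpace E]
    {Z : Type*} [MeasurableSpace Z] {m : Measure Z} [IsFiniteMeasure m] {g : Z → C} {G : Z → E}
    (hg : Measurable g) (hGm : Measurable G) (hG : Integrable G m) :
    Integrable (fun z => cellTest i (g z) (G z)) m :=
  ((integrable_const i.2.1).add (i.2.2.integrable_comp hG)).mono
    ((measurable_cellTest i).comp (hg.prodMk hGm)).aestronglyMeasurable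
    (Filter.Eventually.of_forall fun _ => abs_cellTest_le i _ _)

end CellTest

/-- For `T` dominated by `F` in convex order, finitely many constraints can be met exactly. The set
of attainable values is compact and convex, so a missed target would be separated from it by a
combination `L` of the test functions. Then `φ u = max_c L(c, u)` is convex, and the law of
`(t (F y), y)`, with `t u` a maximizer, attains a value at least that of the target. -/
lemma exists_law_of_finset {X Y C E : Type*} [MeasurableSpace X]
    [MeasurableSpace Y] [TopologicalSpace Y] [PolishSpace Y] [BorelSpace Y]
    [MeasurableSpace C] [TopologicalSpace C] [BorelSpace C] [CompactSpace C] [PolishSpace C]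
    [Nonempty C]
    [NormedAddCommGroup E] [NormedSpace ℝ E] [MeasurableSpace E] [BorelSpace E]
    (μ : Measure X) [IsProbabilityMeasure μ] (ν : Measure Y) [IsProbabilityMeasure ν]
    {e : X → C} (he : Measurable e) {T : X → E} (hTm : Measurable T) (hT : Integrable T μ)
    {F : Y → E} (hFm : Measurable F) (hF : Integrable F ν)
    (hdom : ConvexDom (μ.map T) (ν.map F))
    (s : Finset ({A : Set C // IsClopen A} × ℝ × (E →L[ℝ] ℝ))) :
    ∃ σ : lawsWithSnd C ν, ∀ i ∈ s,
      ∫ z, cellTest i z.1 (F z.2) ∂(σ.1 : Measure (C × Y)) = ∫ x, cellTest i (e x) (T x) ∂μ := by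
  classical
  have : CompactSpace (lawsWithSnd C ν) := isCompact_iff_compactSpace.1 (isCompact_lawsWithSnd ν)
  have hcell : ∀ (σ : lawsWithSnd C ν) (i : {A : Set C // IsClopen A} × ℝ × (E →L[ℝ] ℝ)),
      Integrable (fun z : C × Y => cellTest i z.1 (F z.2)) (σ.1 : Measure (C × Y)) := fun σ i =>
    integrable_cellTest i measurable_fst (hFm.comp measurable_snd)
      (integrable_comp_snd (show Integrable F (σ.1 : Measure (C × Y)).snd from σ.2.symm ▸ hF))
  let Φ : lawsWithSnd C ν → (s → ℝ) := fun σ i =>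
    ∫ z, cellTest i.1 z.1 (F z.2) ∂(σ.1 : Measure (C × Y))
  have hΦ : Continuous Φ := continuous_pi fun i =>
    continuous_integral_indicator ν i.1.1.2
      ((integrable_const i.1.2.1).add (i.1.2.2.integrable_comp hF))
  have hclosed : IsClosed (Set.range Φ) := (isCompact_range hΦ).isClosed
  have hconv : Convex ℝ (Set.range Φ) := by
    rintro _ ⟨σ₁, rfl⟩ _ ⟨σ₂, rfl⟩ a b ha hb hab
    let m : Measure (C × Y) := ENNReal.ofReal a • (σ₁.1 : Measure (C × Y)) +
      ENNReal.ofReal b • (σ₂.1 : Measure (C × Y))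
    have hsum : ENNReal.ofReal a + ENNReal.ofReal b = 1 := by
      rw [← ENNReal.ofReal_add ha hb, hab, ENNReal.ofReal_one]
    have hm : IsProbabilityMeasure m := ⟨by simp [m, hsum]⟩
    have hsnd : m.snd = ν := by
      have h₁ : (σ₁.1 : Measure (C × Y)).map Prod.snd = ν := σ₁.2
      have h₂ : (σ₂.1 : Measure (C × Y)).map Prod.snd = ν := σ₂.2
      rw [Measure.snd, Measure.map_add _ _ measurable_snd, Measure.map_smul, Measure.map_smul,
        h₁, h₂, ← add_smul, hsum, one_smul]
    refine ⟨⟨⟨m, hm⟩, hsnd⟩, ?_⟩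
    ext i
    change ∫ z, cellTest i.1 z.1 (F z.2) ∂m = _
    rw [integral_add_measure ((hcell σ₁ _).smul_measure ENNReal.ofReal_ne_top)
      ((hcell σ₂ _).smul_measure ENNReal.ofReal_ne_top), integral_smul_measure,
      integral_smul_measure, ENNReal.toReal_ofReal ha, ENNReal.toReal_ofReal hb]
    rfl
  suffices hmem : (fun i : s => ∫ x, cellTest i.1 (e x) (T x) ∂μ) ∈ Set.range Φ by
    obtain ⟨σ, hσ⟩ := hmem
    exact ⟨σ, fun i hi => congrFun hσ ⟨i, hi⟩⟩
  by_contra hnot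
  obtain ⟨f, r, hlt, hgt⟩ := geometric_hahn_banach_closed_point hconv hclosed hnot
  let w : s → ℝ := fun i => f fun j => if i = j then 1 else 0
  have hfw : ∀ v : s → ℝ, f v = ∑ i, v i * w i := fun v =>
    (f : (s → ℝ) →ₗ[ℝ] ℝ).pi_apply_eq_sum_univ v
  let L : C → E → ℝ := fun c u => ∑ i : s, cellTest i.1 c u * w i
  have hLm : ∀ c, Measurable (L c) := fun c => Finset.measurable_sum _ fun i _ =>
    ((measurable_cellTest i.1).comp measurable_prodMk_left).mul_const _
  obtain ⟨R, hR, hpat⟩ := exists_finset_patterns fun i : s => i.1.1.1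
  obtain ⟨t, htm, hφm, hmax⟩ := exists_measurable_argmax L hLm R hR
  have hLle : ∀ c u, L c u ≤ L (t u) u := fun c u => by
    obtain ⟨c', hc', hcc'⟩ := hpat c
    refine le_trans (le_of_eq ?_) (hmax c' hc' u)
    refine Finset.sum_congr rfl fun i _ => ?_
    simp only [cellTest, Set.indicator, hcc' i]
  have hφconv : ConvexOn ℝ Set.univ fun u => L (t u) u := by
    refine ⟨convex_univ, fun u _ v _ a b ha hb hab => ?_⟩
    have hL : ∀ c, L c (a • u + b • v) = a * L c u + b * L c v := fun c => by
      simp only [L, cellTest_affine _ _ _ _ hab, Finset.mul_sum, ← Finset.sum_add_distrib]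
      exact Finset.sum_congr rfl fun i _ => by ring
    simp only [hL, smul_eq_mul]
    gcongr <;> exact hLle _ _
  have hφY : Integrable (fun y => L (t (F y)) (F y)) ν :=
    integrable_finsetSum _ fun i _ =>
      (integrable_cellTest i.1 (htm.comp hFm) hFm hF).mul_const _
  have hφX : Integrable (fun x => L (t (T x)) (T x)) μ :=
    integrable_finsetSum _ fun i _ =>
      (integrable_cellTest i.1 (htm.comp hTm) hTm hT).mul_const _
  have hjensen : ∫ x, L (t (T x)) (T x) ∂μ ≤ ∫ y, L (t (F y)) (F y) ∂ν := by
    have h := hdom.2.2 _ hφconv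
      ((integrable_map_measure hφm.aestronglyMeasurable hFm.aemeasurable).2 hφY)
    rwa [integral_map hTm.aemeasurable hφm.aestronglyMeasurable,
      integral_map hFm.aemeasurable hφm.aestronglyMeasurable] at h
  have hpair : Measurable fun y => (t (F y), y) := (htm.comp hFm).prodMk measurable_id
  let m : Measure (C × Y) := ν.map fun y => (t (F y), y)
  have hm : IsProbabilityMeasure m := Measure.isProbabilityMeasure_map hpair.aemeasurable
  have hsnd : m.snd = ν := by
    rw [Measure.snd, Measure.map_map measurable_snd hpair]
    exact Measure.map_id
  have h1 := hlt _ ⟨⟨⟨m, hm⟩, hsnd⟩, rfl⟩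
  have hval : f (Φ ⟨⟨m, hm⟩, hsnd⟩) = ∫ y, L (t (F y)) (F y) ∂ν := by
    rw [hfw, integral_finsetSum _ fun i _ =>
      (integrable_cellTest i.1 (htm.comp hFm) hFm hF).mul_const _]
    refine Finset.sum_congr rfl fun i _ => ?_
    rw [integral_mul_const]
    congr 1
    exact integral_map hpair.aemeasurable
      ((measurable_cellTest i.1).comp
        (measurable_fst.prodMk (hFm.comp measurable_snd))).aestronglyMeasurable
  have htarget : f (fun i : s => ∫ x, cellTest i.1 (e x) (T x) ∂μ) = ∫ x, L (e x) (T x) ∂μ := by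
    rw [hfw, integral_finsetSum _ fun i _ =>
      (integrable_cellTest i.1 he hTm hT).mul_const _]
    exact Finset.sum_congr rfl fun i _ => (integral_mul_const _ _).symm
  have hle : ∫ x, L (e x) (T x) ∂μ ≤ ∫ x, L (t (T x)) (T x) ∂μ :=
    integral_mono (integrable_finsetSum _ fun i _ =>
      (integrable_cellTest i.1 he hTm hT).mul_const _) hφX fun x => hLle _ _
  rw [hval] at h1
  rw [htarget] at hgt
  linarith

/-- By compactness, all the constraints can be met at once. -/
lemma exists_law {X Y C E : Type*} [MeasurableSpace X]
    [MeasurableSpace Y] [TopologicalSpace Y] [PolishSpace Y] [BorelSpace Y]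
    [MeasurableSpace C] [TopologicalSpace C] [BorelSpace C] [CompactSpace C] [PolishSpace C]
    [Nonempty C]
    [NormedAddCommGroup E] [NormedSpace ℝ E] [MeasurableSpace E] [BorelSpace E]
    (μ : Measure X) [IsProbabilityMeasure μ] (ν : Measure Y) [IsProbabilityMeasure ν]
    {e : X → C} (he : Measurable e) {T : X → E} (hTm : Measurable T) (hT : Integrable T μ)
    {F : Y → E} (hFm : Measurable F) (hF : Integrable F ν)
    (hdom : ConvexDom (μ.map T) (ν.map F)) :
    ∃ σ : lawsWithSnd C ν, ∀ i : {A : Set C // IsClopen A} × ℝ × (E →L[ℝ] ℝ),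
      ∫ z, cellTest i z.1 (F z.2) ∂(σ.1 : Measure (C × Y)) = ∫ x, cellTest i (e x) (T x) ∂μ := by
  have : CompactSpace (lawsWithSnd C ν) := isCompact_iff_compactSpace.1 (isCompact_lawsWithSnd ν)
  have hclosed : ∀ i : {A : Set C // IsClopen A} × ℝ × (E →L[ℝ] ℝ),
      IsClosed {σ : lawsWithSnd C ν | ∫ z, cellTest i z.1 (F z.2) ∂(σ.1 : Measure (C × Y)) =
        ∫ x, cellTest i (e x) (T x) ∂μ} := fun i =>
    isClosed_eq (continuous_integral_indicator ν i.1.2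
      ((integrable_const i.2.1).add (i.2.2.integrable_comp hF))) continuous_const
  obtain ⟨σ, hσ⟩ := CompactSpace.iInter_nonempty hclosed fun s => by
    obtain ⟨σ, hσ⟩ := exists_law_of_finset μ ν he hTm hT hFm hF hdom s
    exact ⟨σ, Set.mem_iInter₂.2 hσ⟩
  exact ⟨σ, fun i => Set.mem_iInter.1 hσ i⟩

/-! ### Strassen: dominated maps are barycenter maps -/

/-- Clopen sets of `C` determine an integrable function on `X` when `X` embeds into `C`. -/
lemma ae_eq_zero_of_setIntegral_clopen {X C E : Type*} [MeasurableSpace X]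
    [MeasurableSpace C] [TopologicalSpace C] [BorelSpace C] [SecondCountableTopology C]
    [CompactSpace C] [T2Space C] [TotallyDisconnectedSpace C]
    [NormedAddCommGroup E] [NormedSpace ℝ E] [CompleteSpace E]
    {μ : Measure X} [IsFiniteMeasure μ] {e : X → C} (he : MeasurableEmbedding e) {D : X → E}
    (hD : Integrable D μ) (h0 : ∀ A : Set C, IsClopen A → ∫ x in e ⁻¹' A, D x ∂μ = 0) :
    D =ᵐ[μ] 0 := by
  have hgen : ‹MeasurableSpace C› = MeasurableSpace.generateFrom {A : Set C | IsClopen A} := by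
    rw [BorelSpace.measurable_eq (α := C)]
    exact isTopologicalBasis_isClopen.borel_eq_generateFrom
  have key : ∀ A : Set C, MeasurableSet A → ∫ x in e ⁻¹' A, D x ∂μ = 0 := by
    intro A hA
    induction A, hA using MeasurableSpace.induction_on_inter hgen
      (fun A hA B hB _ => IsClopen.inter hA hB) with
    | empty => simp
    | basic A hA => exact h0 A hA
    | compl A hA ih =>
      have h := integral_add_compl (he.measurable hA) hD
      have hu := h0 Set.univ isClopen_univ
      rw [Set.preimage_univ, setIntegral_univ] at hu
      rwa [ih, zero_add, hu] at h
    | iUnion f hdisj hf ih =>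
      rw [Set.preimage_iUnion, integral_iUnion (fun n => he.measurable (hf n))
        (fun i j hij => (hdisj hij).preimage e) hD.integrableOn]
      simp [ih]
  refine hD.ae_eq_zero_of_forall_setIntegral_eq_zero fun S hS _ => ?_
  rw [← Set.preimage_image_eq S he.injective]
  exact key _ (he.measurableSet_image.2 hS)

/-- Strassen's theorem: a map dominated by `F` in convex order is, almost everywhere, the
barycenter map of a coupling of `μ` and `ν`. The measurable embedding of `X` into Cantor space
supplies a compact model of `X` whose Borel sets are generated by clopen sets. -/
lemma exists_coupling_of_convexDom {X Y E : Type*} [MeasurableSpace X] [StandardBorelSpace X]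
    [MeasurableSpace Y] [TopologicalSpace Y] [PolishSpace Y] [BorelSpace Y] [Nonempty Y]
    [NormedAddCommGroup E] [NormedSpace ℝ E] [FiniteDimensional ℝ E] [MeasurableSpace E]
    [BorelSpace E] [SecondCountableTopology E] [CompleteSpace E]
    (μ : Measure X) [IsProbabilityMeasure μ] (ν : Measure Y) [IsProbabilityMeasure ν]
    {F : Y → E} (hFm : Measurable F) (hF : Integrable F ν) {T : X → E} (hTm : Measurable T)
    (hdom : ConvexDom (μ.map T) (ν.map F)) :
    ∃ σ : ProbabilityMeasure (X × Y), (σ : Measure (X × Y)).map Prod.fst = μ ∧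
      (σ : Measure (X × Y)).map Prod.snd = ν ∧
      ∀ᵐ x ∂μ, ∫ y, F y ∂condMeas σ x = T x := by
  have hT : Integrable T μ := by
    have h := hdom.1
    rw [integrable_map_measure (by fun_prop) hTm.aemeasurable] at h
    exact (integrable_norm_iff hTm.aestronglyMeasurable).1 h
  -- Instance search does not find this by itself inside the product `ℕ → Bool`.
  have : PolishSpace Bool := inferInstance
  let e : X → ℕ → Bool := MeasurableSpace.mapNatBool X
  have hem : Measurable e := MeasurableSpace.measurable_mapNatBool X
  have he : MeasurableEmbedding e :=
    hem.measurableEmbedding (MeasurableSpace.injective_mapNatBool X)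
  obtain ⟨⟨⟨ρ, hρ⟩, hsnd⟩, hρi⟩ := exists_law (C := ℕ → Bool) μ ν hem hTm hT hFm hF hdom
  change ρ.snd = ν at hsnd
  change ∀ i : {A : Set (ℕ → Bool) // IsClopen A} × ℝ × (E →L[ℝ] ℝ),
    ∫ z, cellTest i z.1 (F z.2) ∂ρ = ∫ x, cellTest i (e x) (T x) ∂μ at hρi
  have hμe : IsProbabilityMeasure (μ.map e) := Measure.isProbabilityMeasure_map hem.aemeasurable
  have hFρ : Integrable (fun z : (ℕ → Bool) × Y => F z.2) ρ := integrable_comp_snd (hsnd.symm ▸ hF)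
  -- The constraints rewritten as integrals over the clopen cells.
  have hset : ∀ (A : Set (ℕ → Bool)) (hA : IsClopen A) (b : ℝ) (l : E →L[ℝ] ℝ),
      ∫ z in Prod.fst ⁻¹' A, (b + l (F z.2)) ∂ρ = ∫ x in e ⁻¹' A, (b + l (T x)) ∂μ := by
    intro A hA b l
    rw [← integral_indicator (measurable_fst hA.isOpen.measurableSet),
      ← integral_indicator (hem hA.isOpen.measurableSet)]
    exact hρi ⟨⟨A, hA⟩, b, l⟩
  have hfst : ρ.fst = μ.map e := by
    refine ext_of_generate_finite {A : Set (ℕ → Bool) | IsClopen A} ?_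
      (fun A hA B hB _ => IsClopen.inter hA hB) (fun A hA => ?_) (by simp)
    · rw [BorelSpace.measurable_eq (α := ℕ → Bool)]
      exact isTopologicalBasis_isClopen.borel_eq_generateFrom
    · have hAm : MeasurableSet A := IsOpen.measurableSet (IsClopen.isOpen hA)
      have h := hset A hA 1 0
      simp only [zero_apply, add_zero, integral_const, smul_eq_mul, mul_one,
        measureReal_restrict_apply_univ] at h
      rw [Measure.fst_apply hAm, Measure.map_apply hem hAm]
      exact (measureReal_eq_measureReal_iff).1 h
  let κ := ρ.condKernel
  have hκ : (μ.map e).compProd κ = ρ := hfst ▸ ρ.disintegrate ρ.condKernel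
  have hbar : Integrable (fun c => ∫ y, F y ∂κ c) (μ.map e) := hfst ▸ hFρ.integral_condKernel
  have hbarm : Measurable fun c => ∫ y, F y ∂κ c :=
    (hFm.stronglyMeasurable.integral_kernel (κ := κ)).measurable
  have hbarX : Integrable (fun x => ∫ y, F y ∂κ (e x)) μ := hbar.comp_measurable hem
  have hae : (fun x => ∫ y, F y ∂κ (e x) - T x) =ᵐ[μ] 0 := by
    refine ae_eq_zero_of_setIntegral_clopen he (hbarX.sub hT) fun A hA => ?_
    have hAm : MeasurableSet A := hA.isOpen.measurableSet
    rw [integral_sub hbarX.integrableOn hT.integrableOn, sub_eq_zero]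
    have h1 : ∫ x in e ⁻¹' A, ∫ y, F y ∂κ (e x) ∂μ = ∫ z in Prod.fst ⁻¹' A, F z.2 ∂ρ := by
      rw [← setIntegral_map hAm hbarm.aestronglyMeasurable hem.aemeasurable, ← hfst]
      rw [← Set.prod_univ]
      exact Measure.setIntegral_condKernel_univ_right hAm hFρ.integrableOn
    rw [h1]
    refine (SeparatingDual.eq_iff_forall_dual_eq (R := ℝ)).2 fun l => ?_
    rw [← l.integral_comp_comm hFρ.integrableOn, ← l.integral_comp_comm hT.integrableOn]
    simpa using hset A hA 0 l
  let κ' := κ.comap e hem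
  have hκ' : IsProbabilityMeasure (μ.compProd κ') := inferInstance
  refine ⟨⟨μ.compProd κ', hκ'⟩, Measure.fst_compProd μ κ', ?_, ?_⟩
  · change (μ.compProd κ').snd = ν
    rw [← hsnd, ← hκ]
    ext s hs
    rw [Measure.snd_compProd, Measure.snd_compProd, Measure.bind_apply hs κ'.aemeasurable,
      Measure.bind_apply hs κ.aemeasurable, lintegral_map (κ.measurable_coe hs) hem]
    rfl
  · filter_upwards [ProbabilityTheory.condKernel_compProd μ κ', hae] with x hx hDx
    change ∫ y, F y ∂((μ.compProd κ').condKernel x) = T x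
    rw [hx]
    exact sub_eq_zero.1 hDx

/-! ### Equivalence of the two problems -/

/-- **The nonlinear Kantorovich problem with cost `h(x, g(σ^x))`, `g(p) = ∫ F dp`, attains
its infimum iff the corresponding Monge problem with convex dominance does.** Let `X, Y` be
Polish spaces, `μ, ν` Borel probability measures, `F : Y → ℝ^d` Borel measurable and
`ν`-integrable, `g(p) = ∫_Y F(y) p(dy)`, `h : X × ℝ^d → ℝ` Borel measurable. Then the
infimum of `σ ↦ ∫_X h(x, g(σ^x)) dμ` over `Π(μ,ν)` is attained if and only if the infimum
of `T ↦ ∫_X h(x, T(x)) dμ` over Borel maps `T : X → ℝ^d` with `μ∘T⁻¹ ≼_c ν∘F⁻¹`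
is attained. -/
theorem exists_min_nonlinear_kantorovich_iff_exists_min_monge_convexDom
    {X Y : Type*} [MeasurableSpace X] [TopologicalSpace X] [PolishSpace X] [BorelSpace X]
    [MeasurableSpace Y] [TopologicalSpace Y] [PolishSpace Y] [BorelSpace Y] [Nonempty Y]
    (μ : Measure X) [IsProbabilityMeasure μ] (ν : Measure Y) [IsProbabilityMeasure ν]
    {d : ℕ} (F : Y → EuclideanSpace ℝ (Fin d)) (hFmeas : Measurable F)
    (hFint : Integrable F ν)
    (h : X → EuclideanSpace ℝ (Fin d) → ℝ)
    (hh : Measurable (fun q : X × EuclideanSpace ℝ (Fin d) => h q.1 q.2)) :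
    (∃ σ : {σ : ProbabilityMeasure (X × Y) //
        (σ : Measure (X × Y)).map Prod.fst = μ ∧ (σ : Measure (X × Y)).map Prod.snd = ν},
      ∀ σ' : {σ' : ProbabilityMeasure (X × Y) //
        (σ' : Measure (X × Y)).map Prod.fst = μ ∧ (σ' : Measure (X × Y)).map Prod.snd = ν},
        ∫ x, h x (∫ y, F y ∂(condMeas σ.1 x)) ∂μ ≤
          ∫ x, h x (∫ y, F y ∂(condMeas σ'.1 x)) ∂μ) ↔
    (∃ T : {T : X → EuclideanSpace ℝ (Fin d) //
        Measurable T ∧ ConvexDom (μ.map T) (ν.map F)},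
      ∀ T' : {T' : X → EuclideanSpace ℝ (Fin d) //
        Measurable T' ∧ ConvexDom (μ.map T') (ν.map F)},
        ∫ x, h x (T.1 x) ∂μ ≤ ∫ x, h x (T'.1 x) ∂μ) := by
  have bary : ∀ σ : ProbabilityMeasure (X × Y), (σ : Measure (X × Y)).map Prod.fst = μ →
      (σ : Measure (X × Y)).map Prod.snd = ν →
      Measurable (fun x => ∫ y, F y ∂condMeas σ x) ∧
        ConvexDom (μ.map fun x => ∫ y, F y ∂condMeas σ x) (ν.map F) := by
    rintro σ rfl rfl
    exact ⟨(hFmeas.stronglyMeasurable.integral_kernel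
      (κ := (σ : Measure (X × Y)).condKernel)).measurable,
      convexDom_map_integral_condKernel (σ : Measure (X × Y)) hFmeas hFint⟩
  constructor
  · rintro ⟨⟨σ, h₁, h₂⟩, hmin⟩
    refine ⟨⟨_, bary σ h₁ h₂⟩, fun ⟨T', hT', hdom⟩ => ?_⟩
    obtain ⟨σ', h₁', h₂', hae⟩ := exists_coupling_of_convexDom μ ν hFmeas hFint hT' hdom
    refine (hmin ⟨σ', h₁', h₂'⟩).trans (integral_congr_ae ?_).le
    filter_upwards [hae] with x hx
    exact congrArg (h x) hx
  · rintro ⟨⟨T, hT, hdom⟩, hmin⟩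
    obtain ⟨σ, h₁, h₂, hae⟩ := exists_coupling_of_convexDom μ ν hFmeas hFint hT hdom
    refine ⟨⟨σ, h₁, h₂⟩, fun ⟨σ', h₁', h₂'⟩ => ?_⟩
    refine (integral_congr_ae ?_).le.trans (hmin ⟨_, bary σ' h₁' h₂'⟩)
    filter_upwards [hae] with x hx
    exact congrArg (h x) hx
end
end

section
/- Let Y be a Polish space and let F : Y → ℝ^d be a Borel measurable function. Suppose ζ is a Borel probability measure on ℝ^d, ν is a Borel probability measure on Y, F is ν-integrable, and ζ ≼_c ν∘F⁻¹. Then there exists a measure π ∈ Π(ζ,ν) on ℝ^d × Y such that its conditional measures π^u with respect to ζ satisfy ∫_Y F(y) π^u(dy) = u for ζ-almost every u ∈ ℝ^d. -/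
/-!
The required `π` is a coupling of `ζ` and `ν` with `∫_{s × Y} F(y) dπ = ∫_s u dζ` for every Borel
set `s`: disintegrating such a `π` with respect to `ζ` shows that `u ↦ ∫ F dπ^u` and the identity
have the same integral over each Borel set, so they agree `ζ`-almost everywhere.

For a finite partition into cells `A i` this is a finite-dimensional duality (over `i`). The
families `(∫ g i • (1, F) dν)_i`, with measurable `g i ≥ 0` and `∑ i, g i = 1`, form a convex set.
If `(∫_{A i} (1, u) dζ)_i` were outside its closure, Hahn-Banach would give affine functions
`u ↦ L i (1, u)` whose maximum `φ` is convex with `∫ φ dζ > ∫ φ dν∘F⁻¹`, contradicting the convex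
order (`exists_weights_near`). Pairing the normalized restriction of `ζ` to `A i` with `g i • ν`
gives approximate couplings (`exists_approx_coupling`).

Applying this along the partitions generated by the first `n` members of a countable algebra that
generates the Borel sets gives a tight sequence of measures on `E × Y`. A Prokhorov limit `π` has
marginals `ζ` and `ν`. The integrals of `1_S(u) F(y)` pass to the limit although the integrand is
neither continuous nor bounded, because the second marginals are all `ν` and the first ones are all
dominated by `2 ζ` (`tendsto_integral_indicator_mul`). Hence the identity holds exactly on the
algebra (`exists_coupling_of_seq`), and a `π`-`λ` argument extends it to all Borel sets
(`setIntegral_fst_preimage_eq_of_algebra`).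
-/

open MeasureTheory

noncomputable section

section Strassen

open Filter Topology Set

/-! ### Couplings matching the barycentres on a finite partition -/

lemma integrable_one_prod {E α : Type*} [NormedAddCommGroup E] [MeasurableSpace α]
    {μ : Measure α} [IsFiniteMeasure μ] {G : α → E} (hG : Integrable G μ) :
    Integrable (fun a => ((1 : ℝ), G a)) μ :=
  (integrable_const (1 : ℝ)).prodMk hG

variable {E : Type*} [NormedAddCommGroup E] [NormedSpace ℝ E] [CompleteSpace E]
  [SecondCountableTopology E] [MeasurableSpace E] [BorelSpace E]

/-- Given a finite partition `A i`, the measure `ν` splits into pieces `g i • ν` whose masses and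
`F`-integrals approximate those of the cells `A i` under `ζ`. Otherwise a functional
`(L i)` strictly separates the cell data from the closure of the convex set of attainable data; the
convex function `φ u = max_i L i (1, u)` then contradicts the convex order, because assigning `y`
to the indices attaining the maximum at `F y` makes the value of the functional `∫ φ (F y) dν`. -/
lemma exists_weights_near {Y : Type*} [MeasurableSpace Y] {F : Y → E} (hFmeas : Measurable F)
    {ζ : Measure E} [IsProbabilityMeasure ζ] {ν : Measure Y} [IsProbabilityMeasure ν]
    (hFint : Integrable F ν) (hdom : ConvexDom ζ (ν.map F))
    {ι : Type*} [Fintype ι] [Nonempty ι] {A : ι → Set E} (hA : ∀ i, MeasurableSet (A i))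
    (hdisj : Pairwise (Function.onFun Disjoint A)) (hcov : ∀ᵐ u ∂ζ, u ∈ ⋃ i, A i)
    {ε : ℝ} (hε : 0 < ε) :
    ∃ g : ι → Y → ℝ, (∀ i, Measurable (g i)) ∧ (∀ i y, 0 ≤ g i y) ∧ (∀ y, ∑ i, g i y = 1) ∧
      ∀ i, ‖∫ y, g i y • ((1 : ℝ), F y) ∂ν - ∫ u in A i, ((1 : ℝ), u) ∂ζ‖ ≤ ε := by
  classical
  have hζid : Integrable (fun u : E => u) ζ :=
    (integrable_norm_iff (by fun_prop)).1 hdom.1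
  have hle1 : ∀ g : ι → Y → ℝ, (∀ i y, 0 ≤ g i y) → (∀ y, ∑ i, g i y = 1) →
      ∀ i y, g i y ≤ 1 := fun g h0 h1 i y => by
    rw [← h1 y]
    exact Finset.single_le_sum (f := fun i => g i y) (fun j _ => h0 j y) (Finset.mem_univ i)
  have hint : ∀ g : ι → Y → ℝ, (∀ i, Measurable (g i)) → (∀ i y, 0 ≤ g i y) →
      (∀ y, ∑ i, g i y = 1) → ∀ i, Integrable (fun y => g i y • ((1 : ℝ), F y)) ν :=
    fun g hm h0 h1 i => (integrable_one_prod hFint).bdd_smul 1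
      (hm i).aestronglyMeasurable (.of_forall fun y => by
        rw [Real.norm_of_nonneg (h0 i y)]; exact hle1 g h0 h1 i y)
  -- the attainable families of masses and `F`-integrals
  set K : Set (ι → ℝ × E) := {w | ∃ g : ι → Y → ℝ, (∀ i, Measurable (g i)) ∧
    (∀ i y, 0 ≤ g i y) ∧ (∀ y, ∑ i, g i y = 1) ∧ ∀ i, w i = ∫ y, g i y • ((1 : ℝ), F y) ∂ν} with hK
  set T : ι → ℝ × E := fun i => ∫ u in A i, ((1 : ℝ), u) ∂ζ with hT
  suffices hmem : T ∈ closure K by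
    obtain ⟨w, ⟨g, hm, h0, h1, hw⟩, hd⟩ := Metric.mem_closure_iff.1 hmem ε hε
    refine ⟨g, hm, h0, h1, fun i => ?_⟩
    rw [← hw i, ← dist_eq_norm, dist_comm]
    exact (dist_le_pi_dist T w i).trans hd.le
  have hconv : Convex ℝ K := by
    rintro w ⟨g, hm, h0, h1, hw⟩ w' ⟨g', hm', h0', h1', hw'⟩ a b ha hb hab
    refine ⟨fun i y => a * g i y + b * g' i y, fun i => ((hm i).const_mul a).add
      ((hm' i).const_mul b), fun i y => by have := h0 i y; have := h0' i y; positivity,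
      fun y => ?_, fun i => ?_⟩
    · rw [Finset.sum_add_distrib, ← Finset.mul_sum, ← Finset.mul_sum, h1, h1']; linarith
    · simp only [add_smul, mul_smul, Pi.add_apply, Pi.smul_apply, hw, hw']
      rw [← integral_smul, ← integral_smul]
      exact (integral_add ((hint g hm h0 h1 i).smul a) ((hint g' hm' h0' h1' i).smul b)).symm
  by_contra hnot
  obtain ⟨f, r, hfr, hrf⟩ := geometric_hahn_banach_closed_point hconv.closure isClosed_closure hnot
  set L : ι → (ℝ × E →L[ℝ] ℝ) := fun i => f.comp (ContinuousLinearMap.single ℝ (fun _ => ℝ × E) i)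
    with hL
  have hfL : ∀ w, f w = ∑ i, L i (w i) := fun w => by
    conv_lhs => rw [← Finset.univ_sum_single w, map_sum]
    rfl
  have hne : (Finset.univ : Finset ι).Nonempty := Finset.univ_nonempty
  set φ : E → ℝ := Finset.univ.sup' hne fun i u => L i ((1 : ℝ), u) with hφ
  have hφle : ∀ i u, L i ((1 : ℝ), u) ≤ φ u := fun i u => by
    rw [hφ, Finset.sup'_apply]
    exact Finset.le_sup' (fun i => L i ((1 : ℝ), u)) (Finset.mem_univ i)
  have hφeq : ∀ u, ∃ i, L i ((1 : ℝ), u) = φ u := fun u => by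
    rw [hφ, Finset.sup'_apply]
    obtain ⟨i, -, hi⟩ := Finset.exists_mem_eq_sup' hne (fun i => L i ((1 : ℝ), u))
    exact ⟨i, hi.symm⟩
  have hLcont : ∀ i, Continuous fun u : E => L i ((1 : ℝ), u) := fun i => by fun_prop
  have hφconv : ConvexOn ℝ univ φ := by
    refine Finset.sup'_induction (p := ConvexOn ℝ univ) hne _ (fun _ h1 _ h2 => h1.sup h2)
      fun i _ => ⟨convex_univ, fun x _ y _ a b _ _ hab => le_of_eq ?_⟩
    rw [← map_smul, ← map_smul, ← map_add]
    simp [hab]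
  have hφint : ∀ μ : Measure E, IsFiniteMeasure μ → Integrable (fun u : E => u) μ →
      Integrable φ μ := fun μ _ hμ =>
    Finset.sup'_induction (p := fun ψ : E → ℝ => Integrable ψ μ) hne _
      (fun _ h1 _ h2 => h1.sup h2) fun i _ => (L i).integrable_comp (integrable_one_prod hμ)
  have hφmeas : Measurable φ := Finset.measurable_sup' hne fun i _ => (hLcont i).measurable
  have hφζ := hφint ζ inferInstance hζid
  have : IsProbabilityMeasure (ν.map F) := Measure.isProbabilityMeasure_map hFmeas.aemeasurable
  have hφη := hφint (ν.map F) inferInstance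
    ((integrable_map_measure (by fun_prop) hFmeas.aemeasurable).2 hFint)
  -- the optimal weights split the mass at `y` evenly among the indices attaining the maximum
  set B : ι → Set Y := fun i => {y | L i ((1 : ℝ), F y) = φ (F y)} with hB
  have hBm : ∀ i, MeasurableSet (B i) := fun i =>
    measurableSet_eq_fun ((hLcont i).measurable.comp hFmeas) (hφmeas.comp hFmeas)
  set c : ι → Y → ℝ := fun i => (B i).indicator fun _ => (1 : ℝ) with hc
  have hcm : ∀ i, Measurable (c i) := fun i => measurable_const.indicator (hBm i)
  have hc0 : ∀ i y, 0 ≤ c i y := fun i y => indicator_nonneg (fun _ _ => zero_le_one) y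
  have hcpos : ∀ y, 0 < ∑ j, c j y := fun y => by
    obtain ⟨i, hi⟩ := hφeq (F y)
    refine Finset.sum_pos' (fun j _ => hc0 j y) ⟨i, Finset.mem_univ i, ?_⟩
    simp [hc, hB, hi]
  set g : ι → Y → ℝ := fun i y => c i y / ∑ j, c j y with hg
  have hgm : ∀ i, Measurable (g i) := fun i =>
    (hcm i).div (Finset.measurable_sum _ fun j _ => hcm j)
  have hg0 : ∀ i y, 0 ≤ g i y := fun i y => div_nonneg (hc0 i y) (hcpos y).le
  have hg1 : ∀ y, ∑ i, g i y = 1 := fun y => by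
    rw [hg, ← Finset.sum_div, div_self (hcpos y).ne']
  have hgφ : ∀ y, ∑ i, L i (g i y • ((1 : ℝ), F y)) = φ (F y) := fun y => by
    have : ∀ i, L i (g i y • ((1 : ℝ), F y)) = g i y * φ (F y) := fun i => by
      rw [map_smul, smul_eq_mul]
      by_cases hy : y ∈ B i
      · rw [hy]
      · simp [hg, hc, hy]
    simp_rw [this]
    rw [← Finset.sum_mul, hg1, one_mul]
  have h1 : f T ≤ ∫ u, φ u ∂ζ := by
    have hcov' : ζ.restrict (⋃ i, A i) = ζ := Measure.restrict_eq_self_of_ae_mem hcov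
    rw [hfL]
    calc ∑ i, L i (T i) = ∑ i, ∫ u in A i, L i ((1 : ℝ), u) ∂ζ :=
          Finset.sum_congr rfl fun i _ => ((L i).integral_comp_comm
            (integrable_one_prod hζid).integrableOn).symm
      _ ≤ ∑ i, ∫ u in A i, φ u ∂ζ := Finset.sum_le_sum fun i _ => integral_mono
            ((L i).integrable_comp (integrable_one_prod hζid).integrableOn) hφζ.integrableOn
            (hφle i)
      _ = ∫ u in ⋃ i, A i, φ u ∂ζ :=
            (integral_iUnion_fintype hA hdisj fun i => hφζ.integrableOn).symm
      _ = ∫ u, φ u ∂ζ := by rw [hcov']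
  have h2 : ∫ u, φ u ∂(ν.map F) = f fun i => ∫ y, g i y • ((1 : ℝ), F y) ∂ν := by
    rw [hfL, integral_map hFmeas.aemeasurable hφmeas.aestronglyMeasurable]
    simp_rw [← hgφ]
    rw [integral_finsetSum _ fun i _ => (L i).integrable_comp (hint g hgm hg0 hg1 i)]
    exact Finset.sum_congr rfl fun i _ => (L i).integral_comp_comm (hint g hgm hg0 hg1 i)
  have h3 := hfr _ (subset_closure ⟨g, hgm, hg0, hg1, fun i => rfl⟩)
  have h4 := hdom.2.2 φ hφconv hφη
  linarith

/-- For a finite partition into cells of positive mass, normalized restrictions of `ζ` to the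
cells are paired with the pieces of `ν` given by `exists_weights_near`. The second marginal is
exactly `ν`, while the first one is only dominated by `(1 + ε) ζ`. -/
lemma exists_approx_coupling {Y : Type*} [MeasurableSpace Y] {F : Y → E} (hFmeas : Measurable F)
    {ζ : Measure E} [IsProbabilityMeasure ζ] {ν : Measure Y} [IsProbabilityMeasure ν]
    (hFint : Integrable F ν) (hdom : ConvexDom ζ (ν.map F))
    {ι : Type*} [Fintype ι] {A : ι → Set E} (hA : ∀ i, MeasurableSet (A i))
    (hdisj : Pairwise (Function.onFun Disjoint A)) (hcov : ∀ᵐ u ∂ζ, u ∈ ⋃ i, A i)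
    (hA0 : ∀ i, ζ (A i) ≠ 0) {ε : ℝ} (hε : 0 < ε) :
    ∃ π : ProbabilityMeasure (E × Y),
      (π : Measure (E × Y)).map Prod.fst ≤ ENNReal.ofReal (1 + ε) • ζ ∧
      (π : Measure (E × Y)).map Prod.snd = ν ∧
      ∀ S : Set E, MeasurableSet S → (∀ i, A i ⊆ S ∨ Disjoint (A i) S) →
        ‖∫ z, S.indicator (fun _ => (1 : ℝ)) z.1 • F z.2 ∂(π : Measure (E × Y)) -
          ∫ u in S, u ∂ζ‖ ≤ ε := by
  classical
  have hζid : Integrable (fun u : E => u) ζ :=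
    (integrable_norm_iff (by fun_prop)).1 hdom.1
  have hne : Nonempty ι := by
    obtain ⟨u, hu⟩ := hcov.exists
    obtain ⟨i, -⟩ := mem_iUnion.1 hu
    exact ⟨i⟩
  have hapos : ∀ i, 0 < ζ.real (A i) := fun i =>
    ENNReal.toReal_pos (hA0 i) (measure_ne_top _ _)
  -- a tolerance small relative to every cell mass and to the number of cells
  obtain ⟨δ, hδ, hδA, hδc⟩ : ∃ δ : ℝ, 0 < δ ∧ (∀ i, δ ≤ ε * ζ.real (A i)) ∧
      (Fintype.card ι : ℝ) * δ ≤ ε := by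
    obtain ⟨i₀, hi₀⟩ := Finite.exists_min fun i => ζ.real (A i)
    have hc : (0 : ℝ) < Fintype.card ι := by exact_mod_cast Fintype.card_pos
    refine ⟨min (ε * ζ.real (A i₀)) (ε / Fintype.card ι),
      lt_min (mul_pos hε (hapos _)) (by positivity), fun i => (min_le_left _ _).trans
        (mul_le_mul_of_nonneg_left (hi₀ i) hε.le), ?_⟩
    calc _ ≤ (Fintype.card ι : ℝ) * (ε / Fintype.card ι) :=
          mul_le_mul_of_nonneg_left (min_le_right _ _) hc.le
      _ = ε := by field_simp
  obtain ⟨g, hgm, hg0, hg1, hg⟩ := exists_weights_near hFmeas hFint hdom hA hdisj hcov hδ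
  have hle1 : ∀ i y, g i y ≤ 1 := fun i y => by
    rw [← hg1 y]
    exact Finset.single_le_sum (f := fun i => g i y) (fun j _ => hg0 j y) (Finset.mem_univ i)
  have hgint : ∀ i, Integrable (g i) ν := fun i =>
    Integrable.of_bound (hgm i).aestronglyMeasurable 1 (.of_forall fun y => by
      rw [Real.norm_of_nonneg (hg0 i y)]; exact hle1 i y)
  have hgFint : ∀ i, Integrable (fun y => g i y • F y) ν := fun i =>
    hFint.bdd_smul 1 (hgm i).aestronglyMeasurable (.of_forall fun y => by
      rw [Real.norm_of_nonneg (hg0 i y)]; exact hle1 i y)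
  have hpair : ∀ i, ∫ y, g i y • ((1 : ℝ), F y) ∂ν = (∫ y, g i y ∂ν, ∫ y, g i y • F y ∂ν) :=
    fun i => by
      rw [← integral_pair (hgint i) (hgFint i)]
      simp
  have hpairA : ∀ i, ∫ u in A i, ((1 : ℝ), u) ∂ζ = (ζ.real (A i), ∫ u in A i, u ∂ζ) := fun i => by
    rw [integral_pair (integrable_const _) hζid.integrableOn]
    simp
  have hgmass : ∀ i, ∫ y, g i y ∂ν ≤ ζ.real (A i) + δ := fun i => by
    have h := hg i
    rw [hpair, hpairA] at h
    have h' := (norm_fst_le _).trans h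
    simp only [Prod.fst_sub, Real.norm_eq_abs] at h'
    linarith [(abs_le.1 h').2]
  have hgbar : ∀ i, ‖∫ y, g i y • F y ∂ν - ∫ u in A i, u ∂ζ‖ ≤ δ := fun i => by
    have h := hg i
    rw [hpair, hpairA] at h
    exact (norm_snd_le _).trans h
  set κ : ι → Measure Y := fun i => ν.withDensity fun y => ENNReal.ofReal (g i y) with hκ
  set m : ι → Measure E := fun i => (ζ (A i))⁻¹ • ζ.restrict (A i) with hm
  have hκfin : ∀ i, IsFiniteMeasure (κ i) := fun i =>
    isFiniteMeasure_withDensity_ofReal (hgint i).2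
  have hmprob : ∀ i, IsProbabilityMeasure (m i) := fun i => ⟨by
    simp [hm, ENNReal.inv_mul_cancel (hA0 i) (measure_ne_top _ _)]⟩
  have hκuniv : ∀ i, κ i univ ≤ ENNReal.ofReal (1 + ε) * ζ (A i) := fun i => by
    rw [hκ, withDensity_apply _ MeasurableSet.univ, Measure.restrict_univ,
      ← ofReal_integral_eq_lintegral_ofReal (hgint i) (.of_forall (hg0 i)),
      ← ENNReal.ofReal_toReal (measure_ne_top ζ (A i)), ← ENNReal.ofReal_mul (by linarith)]
    refine ENNReal.ofReal_le_ofReal ((hgmass i).trans ?_)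
    have := hδA i
    simp only [Measure.real] at this ⊢
    linarith
  set P : Measure (E × Y) := ∑ i, (m i).prod (κ i) with hP
  have hsnd : P.map Prod.snd = ν := by
    ext B hB
    rw [Measure.map_apply measurable_snd hB, hP, Measure.finsetSum_apply]
    have : ∀ i, (m i).prod (κ i) (Prod.snd ⁻¹' B) = ∫⁻ y in B, ENNReal.ofReal (g i y) ∂ν :=
      fun i => by
        rw [← Measure.map_apply measurable_snd hB, Measure.map_snd_prod, measure_univ, one_smul,
          hκ, withDensity_apply _ hB]
    simp_rw [this]
    rw [← lintegral_finsetSum _ fun i _ => (hgm i).ennreal_ofReal]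
    simp_rw [← ENNReal.ofReal_sum_of_nonneg fun i _ => hg0 i _, hg1]
    simp
  have hfst : P.map Prod.fst ≤ ENNReal.ofReal (1 + ε) • ζ := by
    rw [Measure.le_iff]
    intro C hC
    rw [Measure.map_apply measurable_fst hC, hP, Measure.finsetSum_apply]
    have : ∀ i, (m i).prod (κ i) (Prod.fst ⁻¹' C) ≤
        ENNReal.ofReal (1 + ε) * ζ.restrict (A i) C := fun i => by
      rw [← Measure.map_apply measurable_fst hC, Measure.map_fst_prod]
      simp only [hm, Measure.smul_apply, smul_eq_mul]
      calc κ i univ * ((ζ (A i))⁻¹ * ζ.restrict (A i) C)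
          ≤ (ENNReal.ofReal (1 + ε) * ζ (A i)) * ((ζ (A i))⁻¹ * ζ.restrict (A i) C) := by
            gcongr; exact hκuniv i
        _ = ENNReal.ofReal (1 + ε) * (ζ (A i) * (ζ (A i))⁻¹) * ζ.restrict (A i) C := by ring
        _ = _ := by rw [ENNReal.mul_inv_cancel (hA0 i) (measure_ne_top _ _), mul_one]
    refine (Finset.sum_le_sum fun i _ => this i).trans ?_
    rw [← Finset.mul_sum, Measure.smul_apply, smul_eq_mul]
    gcongr
    calc ∑ i, ζ.restrict (A i) C = ζ.restrict (⋃ i, A i) C := by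
          rw [Measure.restrict_iUnion hdisj hA, Measure.sum_apply _ hC, tsum_fintype]
      _ ≤ ζ C := Measure.restrict_apply_le _ _
  have hPprob : IsProbabilityMeasure P := ⟨by
    rw [← preimage_univ (f := Prod.snd), ← Measure.map_apply measurable_snd MeasurableSet.univ,
      hsnd, measure_univ]⟩
  refine ⟨⟨P, hPprob⟩, hfst, hsnd, fun S hS hSA => ?_⟩
  -- `S` is a union of cells up to a null set, and `s` selects those cells
  set s : ι → ℝ := fun i => if A i ⊆ S then 1 else 0 with hs
  have hsm : ∀ i, ∫ u, S.indicator (fun _ => (1 : ℝ)) u ∂(m i) = s i := fun i => by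
    rw [integral_indicator_const _ hS, smul_eq_mul, mul_one]
    by_cases h : A i ⊆ S
    · have : (m i) S = 1 := by
        simp [hm, Measure.restrict_apply hS, inter_eq_self_of_subset_right h,
          ENNReal.inv_mul_cancel (hA0 i) (measure_ne_top _ _)]
      simp [Measure.real, this, hs, h]
    · have h' := ((hSA i).resolve_left h).symm.inter_eq
      have : (m i) S = 0 := by simp [hm, Measure.restrict_apply hS, h']
      simp [Measure.real, this, hs, h]
  have hκF : ∀ i, ∫ y, F y ∂(κ i) = ∫ y, g i y • F y ∂ν := fun i => by
    rw [hκ, integral_withDensity_eq_integral_toReal_smul (hgm i).ennreal_ofReal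
      (.of_forall fun _ => ENNReal.ofReal_lt_top)]
    simp_rw [ENNReal.toReal_ofReal (hg0 i _)]
  have hκFint : ∀ i, Integrable F (κ i) := fun i => by
    rw [hκ, integrable_withDensity_iff_integrable_smul' (hgm i).ennreal_ofReal
      (.of_forall fun _ => ENNReal.ofReal_lt_top)]
    simp_rw [ENNReal.toReal_ofReal (hg0 i _)]
    exact hgFint i
  have hI1 : ∫ z, S.indicator (fun _ => (1 : ℝ)) z.1 • F z.2 ∂P =
      ∑ i, s i • ∫ y, g i y • F y ∂ν := by
    rw [hP, integral_finsetSum_measure fun i _ =>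
      ((integrable_const (1 : ℝ)).indicator hS).smul_prod (hκFint i)]
    exact Finset.sum_congr rfl fun i _ => by rw [integral_prod_smul, hsm, hκF]
  have hI2 : ∫ u in S, u ∂ζ = ∑ i, s i • ∫ u in A i, u ∂ζ := by
    rw [← integral_indicator hS]
    conv_lhs => rw [← Measure.restrict_eq_self_of_ae_mem hcov]
    rw [integral_iUnion_fintype hA hdisj fun i => (hζid.indicator hS).integrableOn]
    refine Finset.sum_congr rfl fun i _ => ?_
    by_cases h : A i ⊆ S
    · simp only [hs, h, if_true, one_smul]
      exact setIntegral_congr_fun (hA i) fun u hu => indicator_of_mem (h hu) _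
    · simp only [hs, h, if_false, zero_smul]
      refine setIntegral_eq_zero_of_forall_eq_zero fun u hu => indicator_of_notMem ?_ _
      exact disjoint_left.1 ((hSA i).resolve_left h) hu
  change ‖∫ z, S.indicator (fun _ => (1 : ℝ)) z.1 • F z.2 ∂P - ∫ u in S, u ∂ζ‖ ≤ ε
  rw [hI1, hI2, ← Finset.sum_sub_distrib]
  refine (norm_sum_le _ _).trans (le_trans ?_ hδc)
  rw [← nsmul_eq_mul, ← Finset.card_univ]
  refine Finset.sum_le_card_nsmul _ _ _ fun i _ => ?_
  rw [← smul_sub]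
  by_cases h : A i ⊆ S
  · simpa [hs, h] using hgbar i
  · simpa [hs, h] using hδ.le

/-- The partition used is the one into atoms of the algebra generated by the first `n` sets,
null atoms being discarded. -/
lemma exists_approx_coupling_of_seq {Y : Type*} [MeasurableSpace Y] {F : Y → E}
    (hFmeas : Measurable F) {ζ : Measure E} [IsProbabilityMeasure ζ]
    {ν : Measure Y} [IsProbabilityMeasure ν]
    (hFint : Integrable F ν) (hdom : ConvexDom ζ (ν.map F))
    {S : ℕ → Set E} (hS : ∀ k, MeasurableSet (S k)) (n : ℕ) {ε : ℝ} (hε : 0 < ε) :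
    ∃ π : ProbabilityMeasure (E × Y),
      (π : Measure (E × Y)).map Prod.fst ≤ ENNReal.ofReal (1 + ε) • ζ ∧
      (π : Measure (E × Y)).map Prod.snd = ν ∧
      ∀ k < n, ‖∫ z, (S k).indicator (fun _ => (1 : ℝ)) z.1 • F z.2 ∂(π : Measure (E × Y)) -
        ∫ u in S k, u ∂ζ‖ ≤ ε := by
  classical
  -- the atom in which membership in each `S k` is prescribed by `b`
  set c : (Fin n → Bool) → Set E := fun b => {u | ∀ k : Fin n, u ∈ S k ↔ b k = true} with hc
  have hcm : ∀ b, MeasurableSet (c b) := fun b => by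
    have : c b = ⋂ k : Fin n, {u | u ∈ S k ↔ b k = true} := by ext u; simp [hc]
    rw [this]
    refine MeasurableSet.iInter fun k => ?_
    cases hb : b k
    · have : {u | u ∈ S k ↔ false = true} = (S k)ᶜ := by ext u; simp
      rw [this]
      exact (hS k).compl
    · simpa using hS k
  have hcd : ∀ b b' u, u ∈ c b → u ∈ c b' → b = b' := fun b b' u h h' => by
    ext k
    have := (h k).symm.trans (h' k)
    cases hb : b k <;> cases hb' : b' k <;> simp_all
  have hmem : ∀ u, u ∈ c fun k => decide (u ∈ S k) := fun u k => by simp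
  obtain ⟨π, h1, h2, h3⟩ := exists_approx_coupling hFmeas hFint hdom
    (ι := {b : Fin n → Bool // ζ (c b) ≠ 0}) (A := fun b => c b) (fun b => hcm b)
    (fun b b' hbb => disjoint_left.2 fun u hu hu' => hbb (Subtype.ext (hcd _ _ u hu hu')))
    (by
      have : ∀ᵐ u ∂ζ, ∀ b, ζ (c b) = 0 → u ∉ c b := ae_all_iff.2 fun b => by
        by_cases hb : ζ (c b) = 0
        · simpa [hb] using measure_eq_zero_iff_ae_notMem.1 hb
        · simp [hb]
      filter_upwards [this] with u hu
      exact mem_iUnion.2 ⟨⟨_, fun h0 => hu _ h0 (hmem u)⟩, hmem u⟩)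
    (fun b => b.2) hε
  refine ⟨π, h1, h2, fun k hk => h3 (S k) (hS k) fun b => ?_⟩
  cases hb : b.1 ⟨k, hk⟩
  · exact .inr (disjoint_left.2 fun u hu hu' => by simpa [hb] using (hu ⟨k, hk⟩).1 hu')
  · exact .inl fun u hu => (hu ⟨k, hk⟩).2 hb

/-! ### Weak limits of couplings -/

lemma isTightMeasureSet_of_marginals {X Y : Type*} [MeasurableSpace X] [TopologicalSpace X]
    [PolishSpace X] [BorelSpace X] [MeasurableSpace Y] [TopologicalSpace Y] [PolishSpace Y]
    [BorelSpace Y] {ζ : Measure X} [IsFiniteMeasure ζ] {ν : Measure Y} [IsFiniteMeasure ν] :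
    IsTightMeasureSet {μ : Measure (X × Y) | μ.map Prod.fst ≤ ζ ∧ μ.map Prod.snd ≤ ν} := by
  rw [isTightMeasureSet_iff_exists_isCompact_measure_compl_le]
  intro ε hε
  have hε2 : 0 < ε / 2 := ENNReal.half_pos hε.ne'
  obtain ⟨K, hK, hKζ⟩ := isTightMeasureSet_iff_exists_isCompact_measure_compl_le.1
    (isTightMeasureSet_singleton (μ := ζ)) _ hε2
  obtain ⟨K', hK', hKν⟩ := isTightMeasureSet_iff_exists_isCompact_measure_compl_le.1
    (isTightMeasureSet_singleton (μ := ν)) _ hε2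
  refine ⟨K ×ˢ K', hK.prod hK', fun μ hμ => ?_⟩
  have hsub : (K ×ˢ K')ᶜ ⊆ Prod.fst ⁻¹' Kᶜ ∪ Prod.snd ⁻¹' K'ᶜ := fun z hz => by
    by_contra h
    simp only [mem_union, mem_preimage, mem_compl_iff, not_or, not_not] at h
    exact hz ⟨h.1, h.2⟩
  calc μ (K ×ˢ K')ᶜ ≤ μ (Prod.fst ⁻¹' Kᶜ) + μ (Prod.snd ⁻¹' K'ᶜ) :=
        (measure_mono hsub).trans (measure_union_le _ _)
    _ = μ.map Prod.fst Kᶜ + μ.map Prod.snd K'ᶜ := by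
        rw [Measure.map_apply measurable_fst hK.measurableSet.compl,
          Measure.map_apply measurable_snd hK'.measurableSet.compl]
    _ ≤ ε / 2 + ε / 2 := add_le_add ((hμ.1 _).trans (hKζ _ rfl)) ((hμ.2 _).trans (hKν _ rfl))
    _ = ε := ENNReal.add_halves ε

/-- Replacing `1_S` by `h` and `f` by `G` in `∫ 1_S(x) f(y) dμ` costs an error controlled by
the marginals of `μ` alone, hence uniformly over couplings. -/
lemma abs_integral_indicator_mul_sub_le {X Y : Type*} [MeasurableSpace X] [MeasurableSpace Y]
    {ζ : Measure X} [IsFiniteMeasure ζ] {ν : Measure Y} [IsFiniteMeasure ν]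
    {μ : Measure (X × Y)} [IsFiniteMeasure μ] (h1 : μ.map Prod.fst ≤ ζ) (h2 : μ.map Prod.snd = ν)
    {S : Set X} (hS : MeasurableSet S) {f : Y → ℝ} (hf : Integrable f ν)
    {h : X → ℝ} (hh : Measurable h) {H : ℝ} (hH : ∀ x, |h x| ≤ H)
    {G : Y → ℝ} (hG : Measurable G) {M : ℝ} (hM0 : 0 ≤ M) (hM : ∀ y, |G y| ≤ M) :
    |∫ z, S.indicator (fun _ => (1 : ℝ)) z.1 * f z.2 ∂μ - ∫ z, h z.1 * G z.2 ∂μ| ≤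
      ∫ y, |f y - G y| ∂ν + M * ∫ x, |S.indicator (fun _ => (1 : ℝ)) x - h x| ∂ζ := by
  set χ : X → ℝ := S.indicator (fun _ => (1 : ℝ)) with hχ
  have hχm : Measurable χ := measurable_const.indicator hS
  have hχ1 : ∀ x, |χ x| ≤ 1 := fun x => by by_cases hx : x ∈ S <;> simp [hχ, hx]
  have hGint : Integrable G ν := .of_bound hG.aestronglyMeasurable M (.of_forall hM)
  have hfG : Integrable (fun y => |f y - G y|) ν := (hf.sub hGint).abs
  have hχh : Integrable (fun x => |χ x - h x|) ζ :=
    ((Integrable.of_bound hχm.aestronglyMeasurable 1 (.of_forall hχ1)).sub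
      (.of_bound hh.aestronglyMeasurable H (.of_forall hH))).abs
  have hsndint : ∀ {k : Y → ℝ}, Integrable k ν → Integrable (fun z : X × Y => k z.2) μ :=
    fun {k} hk => by
      rw [← h2] at hk
      exact hk.comp_measurable measurable_snd
  have hχhμ : Integrable (fun z : X × Y => |χ z.1 - h z.1|) μ :=
    (hχh.mono_measure h1).comp_measurable measurable_fst
  have hi1 : Integrable (fun z : X × Y => χ z.1 * f z.2) μ :=
    (hsndint hf).bdd_mul (hχm.comp measurable_fst).aestronglyMeasurable
      (.of_forall fun z => hχ1 z.1)
  have hi2 : Integrable (fun z : X × Y => h z.1 * G z.2) μ :=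
    (hsndint hGint).bdd_mul (hh.comp measurable_fst).aestronglyMeasurable
      (.of_forall fun z => hH z.1)
  rw [← integral_sub hi1 hi2]
  calc |∫ z, χ z.1 * f z.2 - h z.1 * G z.2 ∂μ|
      ≤ ∫ z, |χ z.1 * f z.2 - h z.1 * G z.2| ∂μ := abs_integral_le_integral_abs
    _ ≤ ∫ z, |f z.2 - G z.2| + M * |χ z.1 - h z.1| ∂μ := by
        refine integral_mono (hi1.sub hi2).abs ((hsndint hfG).add (hχhμ.const_mul M)) fun z => ?_
        calc |χ z.1 * f z.2 - h z.1 * G z.2|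
            = |χ z.1 * (f z.2 - G z.2) + G z.2 * (χ z.1 - h z.1)| := by ring_nf
          _ ≤ |χ z.1| * |f z.2 - G z.2| + |G z.2| * |χ z.1 - h z.1| := by
              rw [← abs_mul, ← abs_mul]; exact abs_add_le _ _
          _ ≤ 1 * |f z.2 - G z.2| + M * |χ z.1 - h z.1| := by
              gcongr
              · exact hχ1 _
              · exact hM _
          _ = |f z.2 - G z.2| + M * |χ z.1 - h z.1| := by rw [one_mul]
    _ = ∫ y, |f y - G y| ∂(μ.map Prod.snd) + M * ∫ x, |χ x - h x| ∂(μ.map Prod.fst) := by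
        rw [integral_add (hsndint hfG) (hχhμ.const_mul M), integral_const_mul,
          integral_map measurable_snd.aemeasurable (h2 ▸ hfG.aestronglyMeasurable),
          integral_map measurable_fst.aemeasurable (by fun_prop)]
    _ ≤ _ := by
        rw [h2]
        gcongr
        exact .of_forall fun x => abs_nonneg _

/-- Weak convergence of couplings upgrades to convergence of the integrals of the discontinuous and
unbounded integrand `1_S(x) f(y)` when the first marginals are dominated by a fixed finite measure
and the second marginal is fixed: approximate `1_S` and `f` in `L¹` by bounded continuous
functions. -/
lemma tendsto_integral_indicator_mul {X Y : Type*} [MeasurableSpace X] [TopologicalSpace X]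
    [PolishSpace X] [BorelSpace X] [MeasurableSpace Y] [TopologicalSpace Y] [PolishSpace Y]
    [BorelSpace Y] {ζ : Measure X} [IsFiniteMeasure ζ] {ν : Measure Y} [IsFiniteMeasure ν]
    {σ : ℕ → ProbabilityMeasure (X × Y)} {π : ProbabilityMeasure (X × Y)}
    (hσ : Tendsto σ atTop (𝓝 π))
    (hσ1 : ∀ n, (σ n : Measure (X × Y)).map Prod.fst ≤ ζ)
    (hσ2 : ∀ n, (σ n : Measure (X × Y)).map Prod.snd = ν)
    (hπ1 : (π : Measure (X × Y)).map Prod.fst ≤ ζ) (hπ2 : (π : Measure (X × Y)).map Prod.snd = ν)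
    {S : Set X} (hS : MeasurableSet S) {f : Y → ℝ} (hf : Integrable f ν) :
    Tendsto (fun n => ∫ z, S.indicator (fun _ => (1 : ℝ)) z.1 * f z.2 ∂(σ n : Measure (X × Y)))
      atTop (𝓝 (∫ z, S.indicator (fun _ => (1 : ℝ)) z.1 * f z.2 ∂(π : Measure (X × Y)))) := by
  rw [Metric.tendsto_atTop]
  intro ε hε
  obtain ⟨G, hG, -⟩ := hf.exists_boundedContinuous_integral_sub_le (ε := ε / 6) (by positivity)
  set M : ℝ := ‖G‖ + 1 with hM
  have hM0 : 0 < M := by positivity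
  obtain ⟨h, hh, -⟩ := ((integrable_const (μ := ζ) (1 : ℝ)).indicator
    hS).exists_boundedContinuous_integral_sub_le (ε := ε / 6 / M) (by positivity)
  have key : ∀ μ : ProbabilityMeasure (X × Y), (μ : Measure (X × Y)).map Prod.fst ≤ ζ →
      (μ : Measure (X × Y)).map Prod.snd = ν →
      |∫ z, S.indicator (fun _ => (1 : ℝ)) z.1 * f z.2 ∂(μ : Measure (X × Y)) -
        ∫ z, h z.1 * G z.2 ∂(μ : Measure (X × Y))| ≤ ε / 3 := fun μ h1 h2 => by
    refine (abs_integral_indicator_mul_sub_le h1 h2 hS hf h.continuous.measurable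
      h.norm_coe_le_norm G.continuous.measurable hM0.le fun y =>
        (G.norm_coe_le_norm y).trans (by linarith)).trans ?_
    calc _ ≤ ε / 6 + M * (ε / 6 / M) := add_le_add hG (mul_le_mul_of_nonneg_left hh hM0.le)
      _ = ε / 3 := by field_simp; ring
  set hG' : BoundedContinuousFunction (X × Y) ℝ :=
    (h.compContinuous ⟨Prod.fst, continuous_fst⟩) * (G.compContinuous ⟨Prod.snd, continuous_snd⟩)
  have hlim := ProbabilityMeasure.tendsto_iff_forall_integral_tendsto.1 hσ hG'
  obtain ⟨N, hN⟩ := Metric.tendsto_atTop.1 hlim (ε / 3) (by positivity)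
  refine ⟨N, fun n hn => ?_⟩
  have a1 := abs_le.1 (key (σ n) (hσ1 n) (hσ2 n))
  have a2 := abs_le.1 (key π hπ1 hπ2)
  have a3 := abs_lt.1 (hN n hn)
  have e : ∀ z : X × Y, hG' z = h z.1 * G z.2 := fun z => rfl
  simp only [e] at a3
  rw [Real.dist_eq, abs_lt]
  constructor <;> linarith [a1.1, a1.2, a2.1, a2.2, a3.1, a3.2]

/-- If the first marginals are at most `(1 + ε n) ζ` with `ε n → 0`, the limit has first marginal
`ζ`: it is at most `ζ` on open sets, hence everywhere by outer regularity, and both have mass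
one. -/
lemma map_fst_eq_of_tendsto {X Y : Type*} [MeasurableSpace X] [TopologicalSpace X]
    [PolishSpace X] [BorelSpace X] [MeasurableSpace Y] [TopologicalSpace Y] [PolishSpace Y]
    [BorelSpace Y] {ζ : Measure X} [IsProbabilityMeasure ζ]
    {σ : ℕ → ProbabilityMeasure (X × Y)} {π : ProbabilityMeasure (X × Y)}
    (hσ : Tendsto σ atTop (𝓝 π)) {ε : ℕ → ℝ} (hε : Tendsto ε atTop (𝓝 0))
    (hσ1 : ∀ n, (σ n : Measure (X × Y)).map Prod.fst ≤ ENNReal.ofReal (1 + ε n) • ζ) :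
    (π : Measure (X × Y)).map Prod.fst = ζ := by
  let _ := TopologicalSpace.upgradeIsCompletelyMetrizable X
  have : IsProbabilityMeasure ((π : Measure (X × Y)).map Prod.fst) :=
    Measure.isProbabilityMeasure_map measurable_fst.aemeasurable
  have hopen : ∀ U : Set X, IsOpen U → (π : Measure (X × Y)).map Prod.fst U ≤ ζ U := fun U hU => by
    have hlim : Tendsto (fun n => ENNReal.ofReal (1 + ε n) * ζ U) atTop (𝓝 (ζ U)) := by
      have h1 : Tendsto (fun n => ENNReal.ofReal (1 + ε n)) atTop (𝓝 1) := by
        simpa using ENNReal.tendsto_ofReal (hε.const_add 1)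
      simpa using ENNReal.Tendsto.mul_const (b := ζ U) h1 (.inl one_ne_zero)
    calc (π : Measure (X × Y)).map Prod.fst U
        = (π : Measure (X × Y)) (Prod.fst ⁻¹' U) :=
          Measure.map_apply measurable_fst hU.measurableSet
      _ ≤ liminf (fun n => (σ n : Measure (X × Y)) (Prod.fst ⁻¹' U)) atTop :=
          ProbabilityMeasure.le_liminf_measure_open_of_tendsto hσ (hU.preimage continuous_fst)
      _ ≤ liminf (fun n => ENNReal.ofReal (1 + ε n) * ζ U) atTop := by
          refine liminf_le_liminf (.of_forall fun n => ?_)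
          have := hσ1 n U
          rwa [Measure.map_apply measurable_fst hU.measurableSet] at this
      _ = ζ U := hlim.liminf_eq
  refine Measure.eq_of_le_of_isProbabilityMeasure (Measure.le_iff.2 fun A _ => ?_)
  refine le_of_forall_gt fun r hr => ?_
  obtain ⟨U, hAU, hU, hUr⟩ := A.exists_isOpen_lt_of_lt r hr
  exact ((measure_mono hAU).trans (hopen U hU)).trans_lt hUr

/-- For countably many sets, the barycentre condition can be realized exactly by a coupling,
obtained as a weak limit of the couplings of `exists_approx_coupling_of_seq`. -/
lemma exists_coupling_of_seq {Y : Type*} [MeasurableSpace Y] [TopologicalSpace Y]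
    [PolishSpace Y] [BorelSpace Y] {F : Y → E} (hFmeas : Measurable F)
    {ζ : Measure E} [IsProbabilityMeasure ζ] {ν : Measure Y} [IsProbabilityMeasure ν]
    (hFint : Integrable F ν) (hdom : ConvexDom ζ (ν.map F))
    {S : ℕ → Set E} (hS : ∀ k, MeasurableSet (S k)) :
    ∃ π : ProbabilityMeasure (E × Y),
      (π : Measure (E × Y)).map Prod.fst = ζ ∧ (π : Measure (E × Y)).map Prod.snd = ν ∧
      ∀ k, ∫ z, (S k).indicator (fun _ => (1 : ℝ)) z.1 • F z.2 ∂(π : Measure (E × Y)) =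
        ∫ u in S k, u ∂ζ := by
  set ε : ℕ → ℝ := fun n => 1 / ((n : ℝ) + 1) with hεdef
  have hε0 : ∀ n, 0 < ε n := fun n => by positivity
  have hε1 : ∀ n, ε n ≤ 1 := fun n => by
    rw [hεdef]; exact (div_le_one (by positivity)).2 (by simp)
  have hεlim : Tendsto ε atTop (𝓝 0) := tendsto_one_div_add_atTop_nhds_zero_nat
  choose σ hσ1 hσ2 hσ3 using fun n =>
    exists_approx_coupling_of_seq hFmeas hFint hdom hS n (hε0 n)
  -- `2 ζ` dominates all the first marginals simultaneously.
  have hσ1' : ∀ n, (σ n : Measure (E × Y)).map Prod.fst ≤ ENNReal.ofReal 2 • ζ := fun n =>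
    (hσ1 n).trans (Measure.le_iff.2 fun A _ => by
      simp only [Measure.smul_apply, smul_eq_mul]
      gcongr
      linarith [hε1 n])
  have : IsFiniteMeasure (ENNReal.ofReal 2 • ζ) := Measure.smul_finite ζ ENNReal.ofReal_ne_top
  have htight : IsTightMeasureSet {((μ : ProbabilityMeasure (E × Y)) : Measure (E × Y)) |
      μ ∈ Set.range σ} := by
    refine (isTightMeasureSet_of_marginals (ζ := ENNReal.ofReal 2 • ζ) (ν := ν)).subset ?_
    rintro _ ⟨_, ⟨n, rfl⟩, rfl⟩
    exact ⟨hσ1' n, (hσ2 n).le⟩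
  obtain ⟨π, -, φ, hφ, hlim⟩ := (isCompact_closure_of_isTightMeasureSet htight).tendsto_subseq
    fun n => subset_closure (mem_range_self n)
  have hπ1 : (π : Measure (E × Y)).map Prod.fst = ζ :=
    map_fst_eq_of_tendsto hlim (hεlim.comp hφ.tendsto_atTop) fun n => hσ1 (φ n)
  have hπ2 : (π : Measure (E × Y)).map Prod.snd = ν := by
    have h : Tendsto (fun n => (σ (φ n)).map continuous_snd.measurable.aemeasurable) atTop
        (𝓝 (π.map continuous_snd.measurable.aemeasurable)) :=
      ProbabilityMeasure.tendsto_map_of_tendsto_of_continuous _ _ hlim continuous_snd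
    let ν' : ProbabilityMeasure Y := ⟨ν, inferInstance⟩
    have hconst : ∀ n, (σ (φ n)).map continuous_snd.measurable.aemeasurable =
        ν' := fun n => Subtype.ext (hσ2 (φ n))
    simp only [hconst] at h
    have hν' : ν' = π.map continuous_snd.measurable.aemeasurable :=
      tendsto_nhds_unique tendsto_const_nhds h
    exact (congrArg Subtype.val hν').symm
  refine ⟨π, hπ1, hπ2, fun k => ?_⟩
  have hint : ∀ μ : ProbabilityMeasure (E × Y), (μ : Measure (E × Y)).map Prod.snd = ν →
      Integrable (fun z : E × Y => (S k).indicator (fun _ => (1 : ℝ)) z.1 • F z.2)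
        (μ : Measure (E × Y)) := fun μ hμ => by
    have h1 : Integrable (fun z : E × Y => F z.2) (μ : Measure (E × Y)) := by
      rw [← hμ] at hFint
      exact hFint.comp_measurable measurable_snd
    refine h1.bdd_smul 1 ((measurable_const.indicator (hS k)).comp
      measurable_fst).aestronglyMeasurable (.of_forall fun z => ?_)
    by_cases hz : z.1 ∈ S k <;> simp [hz]
  refine (SeparatingDual.eq_iff_forall_dual_eq (R := ℝ)).2 fun l => ?_
  have hl : ∀ μ : ProbabilityMeasure (E × Y), (μ : Measure (E × Y)).map Prod.snd = ν →
      l (∫ z, (S k).indicator (fun _ => (1 : ℝ)) z.1 • F z.2 ∂(μ : Measure (E × Y))) =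
        ∫ z, (S k).indicator (fun _ => (1 : ℝ)) z.1 * l (F z.2) ∂(μ : Measure (E × Y)) :=
    fun μ hμ => by
      rw [← l.integral_comp_comm (hint μ hμ)]
      simp only [map_smul, smul_eq_mul]
  have hle : (ζ : Measure E) ≤ ENNReal.ofReal 2 • ζ := Measure.le_iff.2 fun A _ => by
    simp only [Measure.smul_apply, smul_eq_mul]
    exact le_mul_of_one_le_left' (by simp)
  have hA := tendsto_integral_indicator_mul hlim (fun n => hσ1' (φ n)) (fun n => hσ2 (φ n))
    (hπ1.trans_le hle) hπ2 (hS k) (l.integrable_comp hFint)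
  have hB : Tendsto (fun n => ∫ z, (S k).indicator (fun _ => (1 : ℝ)) z.1 • F z.2
      ∂(σ n : Measure (E × Y))) atTop (𝓝 (∫ u in S k, u ∂ζ)) := by
    rw [tendsto_iff_norm_sub_tendsto_zero]
    refine squeeze_zero' (.of_forall fun n => norm_nonneg _) ?_ hεlim
    filter_upwards [eventually_gt_atTop k] with n hn using hσ3 n k hn
  have hC := (l.continuous.tendsto _).comp (hB.comp hφ.tendsto_atTop)
  rw [hl π hπ2]
  refine tendsto_nhds_unique hA (hC.congr fun n => ?_)
  exact hl _ (hσ2 _)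

/-! ### Extension to all Borel sets -/

lemma setIntegral_fst_preimage_eq_of_algebra {E Y : Type*} [NormedAddCommGroup E]
    [NormedSpace ℝ E] [MeasurableSpace E] [MeasurableSpace Y] {F : Y → E}
    {ζ : Measure E} {π : Measure (E × Y)} [IsFiniteMeasure π]
    (hζ : Integrable (fun u => u) ζ) (hF : Integrable (fun z => F z.2) π)
    {C : Set (Set E)} (hC : IsSetAlgebra C) (hgen : ‹MeasurableSpace E› = .generateFrom C)
    (h : ∀ s ∈ C, ∫ z in Prod.fst ⁻¹' s, F z.2 ∂π = ∫ u in s, u ∂ζ)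
    {s : Set E} (hs : MeasurableSet s) :
    ∫ z in Prod.fst ⁻¹' s, F z.2 ∂π = ∫ u in s, u ∂ζ := by
  induction s, hs using MeasurableSpace.induction_on_inter hgen
    (fun s hs t ht _ => hC.inter_mem hs ht) with
  | empty => simp
  | basic s hs => exact h s hs
  | compl s hs ih =>
    have hu := h univ hC.univ_mem
    simp only [preimage_univ, setIntegral_univ] at hu
    rw [preimage_compl, setIntegral_compl (measurable_fst hs) hF, setIntegral_compl hs hζ, ih, hu]
  | iUnion f hd hf ih =>
    rw [preimage_iUnion, integral_iUnion (fun i => measurable_fst (hf i))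
      (fun i j hij => (hd hij).preimage _) hF.integrableOn,
      integral_iUnion hf hd hζ.integrableOn]
    simp only [ih]

end Strassen

/-- **A generalization of Strassen's theorem on the existence of a martingale coupling.**
Let `Y` be a Polish space, `F : Y → ℝ^d` Borel measurable, `ζ` a Borel probability measure
on `ℝ^d`, `ν` a Borel probability measure on `Y` with `F` being `ν`-integrable, and
`ζ ≼_c ν∘F⁻¹`. Then there exists `π ∈ Π(ζ,ν)` whose conditional measures `π^u` with
respect to `ζ` satisfy `∫_Y F(y) π^u(dy) = u` for `ζ`-a.e. `u`. -/
theorem exists_coupling_barycenter_eq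
    {Y : Type*} [MeasurableSpace Y] [TopologicalSpace Y] [PolishSpace Y] [BorelSpace Y]
    [Nonempty Y]
    {d : ℕ} (F : Y → EuclideanSpace ℝ (Fin d)) (hFmeas : Measurable F)
    (ζ : Measure (EuclideanSpace ℝ (Fin d))) [IsProbabilityMeasure ζ]
    (ν : Measure Y) [IsProbabilityMeasure ν]
    (hFint : Integrable F ν)
    (hdom : ConvexDom ζ (ν.map F)) :
    ∃ π : ProbabilityMeasure (EuclideanSpace ℝ (Fin d) × Y),
      (π : Measure (EuclideanSpace ℝ (Fin d) × Y)).map Prod.fst = ζ ∧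
      (π : Measure (EuclideanSpace ℝ (Fin d) × Y)).map Prod.snd = ν ∧
      ∀ᵐ u ∂ζ, ∫ y, F y ∂(condMeas π u) = u := by
  classical
  have hζid : Integrable (fun u : EuclideanSpace ℝ (Fin d) => u) ζ :=
    (integrable_norm_iff (by fun_prop)).1 hdom.1
  -- a countable algebra generating the Borel sets
  set C := generateSetAlgebra
    (MeasurableSpace.countableGeneratingSet (EuclideanSpace ℝ (Fin d))) with hCdef
  have hC : IsSetAlgebra C := isSetAlgebra_generateSetAlgebra
  have hgen : (inferInstance : MeasurableSpace (EuclideanSpace ℝ (Fin d))) = .generateFrom C := by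
    rw [hCdef, generateFrom_generateSetAlgebra_eq,
      MeasurableSpace.generateFrom_countableGeneratingSet]
  obtain ⟨S, hS⟩ := (countable_generateSetAlgebra
    (MeasurableSpace.countable_countableGeneratingSet
      (α := EuclideanSpace ℝ (Fin d)))).exists_eq_range ⟨_, hC.univ_mem⟩
  have hSm : ∀ k, MeasurableSet (S k) := fun k => by
    have : MeasurableSet[.generateFrom C] (S k) :=
      MeasurableSpace.measurableSet_generateFrom (by rw [hCdef, hS]; exact ⟨k, rfl⟩)
    rwa [← hgen] at this
  obtain ⟨π, hπ1, hπ2, hπ⟩ := exists_coupling_of_seq hFmeas hFint hdom hSm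
  refine ⟨π, hπ1, hπ2, ?_⟩
  have hFπ : Integrable (fun z : EuclideanSpace ℝ (Fin d) × Y => F z.2)
      (π : Measure (EuclideanSpace ℝ (Fin d) × Y)) := by
    rw [← hπ2] at hFint
    exact hFint.comp_measurable measurable_snd
  have hset : ∀ s, MeasurableSet s → ∫ z in Prod.fst ⁻¹' s, F z.2
      ∂(π : Measure (EuclideanSpace ℝ (Fin d) × Y)) = ∫ u in s, u ∂ζ := fun s hs => by
    refine setIntegral_fst_preimage_eq_of_algebra hζid hFπ hC hgen (fun t ht => ?_) hs
    rw [hCdef, hS] at ht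
    obtain ⟨k, rfl⟩ := ht
    rw [← hπ k, ← integral_indicator (measurable_fst (hSm k))]
    refine integral_congr_ae (.of_forall fun z => ?_)
    by_cases hz : z.1 ∈ S k <;> simp [hz]
  have hfst : (π : Measure (EuclideanSpace ℝ (Fin d) × Y)).fst = ζ := hπ1
  refine Integrable.ae_eq_of_forall_setIntegral_eq _ _ ?_ hζid fun s hs _ => ?_
  · have := hFπ.integral_condKernel
    rwa [hfst] at this
  · have := Measure.setIntegral_condKernel_univ_right hs hFπ.integrableOn
    rw [hfst, Set.prod_univ, hset s hs] at this
    exact this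
end
end

section
/- Let X and Y be Polish spaces, μ a Borel probability measure on X, ν a Borel probability measure on Y. Let U be a separable Banach space, F : Y → U a Borel measurable map with ∫_Y ‖F(y)‖_U ν(dy) < ∞, set g(p) = ∫_Y F(y) p(dy) (Bochner integral), and let h : X × U → ℝ be a Borel measurable function. Then the infimum of σ ↦ ∫_X h(x, g(σ^x)) μ(dx) over σ ∈ Π(μ,ν) equals the infimum of T ↦ ∫_X h(x, T(x)) μ(dx) over all Borel measurable maps T : X → U with μ∘T⁻¹ ≼_c ν∘F⁻¹. -/
/-!
The two families of numbers have the same set of values, so they have the same infimum. Two facts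
give this.

*From `σ` to `T`.* For a coupling `σ`, the map `T x = ∫ F dσ^x` is measurable, and Jensen's
inequality in each fibre gives `μ∘T⁻¹ ≼_c ν∘F⁻¹` (`convexDomB_integral_kernel`).

*From `T` to `σ`.* If `μ∘T⁻¹ ≼_c ν∘F⁻¹`, there is a coupling with `∫ F dσ^x = T x` for `μ`-almost
every `x`; this is a form of Strassen's theorem (`exists_kernel_of_convexDomB`). By measurable
embeddings into the Cantor space one may assume that `X` and `Y` are compact, while `T` and `F` stay
merely measurable. On functions `f` on `X × Y` dominated by integrable functions of `y`, let
`p(f) = inf {∫ g dν | f(x, y) ≤ g(y)}`, a sublinear functional (`upperInt`). On the subspace of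
functions `L_x(F y) + k(x)`, with `L` and `k` continuous in `x`, prescribe the value
`∫ (L_x(T x) + k(x)) dμ`. If `L_x(F y) + k(x) ≤ g(y)` for all `x, y`, the lower semicontinuous convex
function `φ(u) = sup_x (L_x u + k(x))` satisfies `φ(F y) ≤ g(y)`, so the convex order bounds the
prescribed value by `∫ φ dν∘F⁻¹ ≤ ∫ g dν` (`ConvexDomB.integral_le_majorant`). Hahn-Banach extends
the prescription to a positive functional `Λ ≤ p` (`exists_functional_le_upperInt`), and
Riesz-Markov represents `Λ` on continuous functions by a measure `σ` (`exists_coupling`). From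
`Λ ≤ p` the second marginal of `σ` is `ν`, and moreover `Λ(k ⊗ b) = ∫ k ⊗ b dσ` for every
`ν`-integrable `b`, by `L¹` approximation. Hence `∫ k(x) l(F y) dσ = ∫ k(x) l(T x) dμ` for all
continuous `k` and all functionals `l`, which says that `∫ F dσ^x = T x` almost everywhere.
-/

open MeasureTheory

noncomputable section

/-- `a` is the barycenter of the measure `μ` on a Banach space `U`:
`l(a) = ∫ l(u) μ(du)` for every continuous linear functional `l`. -/
def IsBarycenter {U : Type*} [NormedAddCommGroup U] [NormedSpace ℝ U] [MeasurableSpace U]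
    (μ : Measure U) (a : U) : Prop :=
  ∀ l : U →L[ℝ] ℝ, l a = ∫ u, l u ∂μ

/-- Convex dominance (convex order) `ζ ≼_c η` for Borel measures on a separable Banach
space: both measures have barycenters and `∫ φ dζ ≤ ∫ φ dη` for every lower semicontinuous
convex function `φ` integrable with respect to `η`. -/
def ConvexDomB {U : Type*} [NormedAddCommGroup U] [NormedSpace ℝ U] [MeasurableSpace U]
    (ζ η : Measure U) : Prop :=
  (∃ a, IsBarycenter ζ a) ∧ (∃ b, IsBarycenter η b) ∧
  ∀ φ : U → ℝ, LowerSemicontinuous φ → ConvexOn ℝ Set.univ φ → Integrable φ η →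
    ∫ u, φ u ∂ζ ≤ ∫ u, φ u ∂η

/-! ### The upper integral and the Hahn-Banach extension -/

/-- The space of (not necessarily measurable) functions `f` on `X × Y` dominated by an integrable
function of the second variable: `|f (x, y)| ≤ g y` with `g` being `ν`-integrable. -/
def DomFun {X Y : Type*} [MeasurableSpace Y] (ν : Measure Y) : Submodule ℝ (X × Y → ℝ) where
  carrier := {f | ∃ g : Y → ℝ, Integrable g ν ∧ ∀ x y, |f (x, y)| ≤ g y}
  add_mem' := by
    rintro f₁ f₂ ⟨g₁, h₁, b₁⟩ ⟨g₂, h₂, b₂⟩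
    exact ⟨g₁ + g₂, h₁.add h₂, fun x y =>
      (abs_add_le _ _).trans (add_le_add (b₁ x y) (b₂ x y))⟩
  zero_mem' := ⟨0, integrable_zero _ _ _, fun x y => by simp⟩
  smul_mem' := by
    rintro c f ⟨g, hg, b⟩
    refine ⟨fun y => |c| * g y, hg.const_mul _, fun x y => ?_⟩
    simpa [abs_mul] using mul_le_mul_of_nonneg_left (b x y) (abs_nonneg c)

/-- The upper integral of `f` on `X × Y`: the infimum of `∫ g dν` over the `ν`-integrable `g` with
`f (x, y) ≤ g y` for all `x, y`. It is a genuine infimum (not the junk value of `sInf`) when `X` is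
nonempty and `f` belongs to `DomFun ν`; there it is a sublinear functional. -/
def upperInt {X Y : Type*} [MeasurableSpace Y] (ν : Measure Y) (f : X × Y → ℝ) : ℝ :=
  sInf {r | ∃ g : Y → ℝ, Integrable g ν ∧ (∀ x y, f (x, y) ≤ g y) ∧ ∫ y, g y ∂ν = r}

section HahnBanach

variable {X Y : Type*} [MeasurableSpace Y] {ν : Measure Y}

lemma upperInt_le [Nonempty X] {f : X × Y → ℝ} (hf : f ∈ DomFun ν) {g : Y → ℝ}
    (hg : Integrable g ν) (hfg : ∀ x y, f (x, y) ≤ g y) : upperInt ν f ≤ ∫ y, g y ∂ν := by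
  obtain ⟨b, hb, hfb⟩ := hf
  refine csInf_le ⟨∫ y, -b y ∂ν, ?_⟩ ⟨g, hg, hfg, rfl⟩
  rintro _ ⟨g', hg', hfg', rfl⟩
  obtain ⟨x⟩ := ‹Nonempty X›
  exact integral_mono hb.neg hg' fun y => (abs_le.1 (hfb x y)).1.trans (hfg' x y)

lemma le_upperInt {f : X × Y → ℝ} (hf : f ∈ DomFun ν) {c : ℝ}
    (h : ∀ g : Y → ℝ, Integrable g ν → (∀ x y, f (x, y) ≤ g y) → c ≤ ∫ y, g y ∂ν) :
    c ≤ upperInt ν f := by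
  obtain ⟨b, hb, hfb⟩ := hf
  refine le_csInf ⟨_, b, hb, fun x y => (le_abs_self _).trans (hfb x y), rfl⟩ ?_
  rintro _ ⟨g, hg, hfg, rfl⟩
  exact h g hg hfg

lemma upperInt_smul_le [Nonempty X] {f : X × Y → ℝ} (hf : f ∈ DomFun ν) {c : ℝ} (hc : 0 < c) :
    c * upperInt ν f ≤ upperInt ν (c • f) := by
  refine le_upperInt ((DomFun ν).smul_mem c hf) fun g hg hfg => ?_
  have := upperInt_le hf (hg.const_mul c⁻¹) fun x y => by
    rw [le_inv_mul_iff₀ hc]; exact hfg x y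
  rwa [integral_const_mul, le_inv_mul_iff₀ hc] at this

lemma upperInt_smul [Nonempty X] {f : X × Y → ℝ} (hf : f ∈ DomFun ν) {c : ℝ} (hc : 0 < c) :
    upperInt ν (c • f) = c * upperInt ν f := by
  refine le_antisymm ?_ (upperInt_smul_le hf hc)
  have := upperInt_smul_le ((DomFun ν).smul_mem c hf) (inv_pos.2 hc)
  rwa [smul_smul, inv_mul_cancel₀ hc.ne', one_smul, inv_mul_le_iff₀ hc] at this

lemma upperInt_add_le [Nonempty X] {f₁ f₂ : X × Y → ℝ} (h₁ : f₁ ∈ DomFun ν)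
    (h₂ : f₂ ∈ DomFun ν) : upperInt ν (f₁ + f₂) ≤ upperInt ν f₁ + upperInt ν f₂ := by
  rw [← sub_le_iff_le_add]
  refine le_upperInt h₁ fun g₁ hg₁ hfg₁ => ?_
  rw [sub_le_comm]
  refine le_upperInt h₂ fun g₂ hg₂ hfg₂ => ?_
  rw [sub_le_iff_le_add', ← integral_add hg₁ hg₂]
  exact upperInt_le ((DomFun ν).add_mem h₁ h₂) (hg₁.add hg₂)
    fun x y => add_le_add (hfg₁ x y) (hfg₂ x y)

/-- Hahn-Banach: a functional `ℓ` on a parameter space `P`, with `ℓ p` bounded by the upper integral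
of the function `A p`, factors through `A` and extends to a functional `Λ` on `DomFun ν` that
stays below the upper integral. Such a `Λ` is positive, and is `∫ · dν` on integrable
functions of `y`. -/
lemma exists_functional_le_upperInt [Nonempty X] {P : Type*} [AddCommGroup P] [Module ℝ P]
    (A : P →ₗ[ℝ] DomFun (X := X) ν) (ℓ : P →ₗ[ℝ] ℝ)
    (h : ∀ p (g : Y → ℝ), Integrable g ν → (∀ x y, (A p).1 (x, y) ≤ g y) →
      ℓ p ≤ ∫ y, g y ∂ν) :
    ∃ Λ : DomFun (X := X) ν →ₗ[ℝ] ℝ, (∀ p, Λ (A p) = ℓ p) ∧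
      ∀ (f : DomFun (X := X) ν) (g : Y → ℝ), Integrable g ν → (∀ x y, f.1 (x, y) ≤ g y) →
        Λ f ≤ ∫ y, g y ∂ν := by
  have hle : ∀ p, ℓ p ≤ upperInt ν (A p).1 := fun p => le_upperInt (A p).2 (h p)
  have hker : LinearMap.ker A ≤ LinearMap.ker ℓ := by
    have key : ∀ p, A p = 0 → ℓ p ≤ 0 := fun p hp => by
      have := h p 0 (integrable_zero _ _ _) (by simp [hp])
      simpa using this
    intro p hp
    rw [LinearMap.mem_ker] at hp ⊢
    refine le_antisymm (key p hp) ?_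
    have := key (-p) (by simp [hp])
    simpa using this
  let ℓ' : LinearMap.range A →ₗ[ℝ] ℝ :=
    (LinearMap.ker A).liftQ ℓ hker ∘ₗ A.quotKerEquivRange.symm.toLinearMap
  have hℓ' : ∀ p, ℓ' ⟨A p, p, rfl⟩ = ℓ p := fun p => by
    have : A.quotKerEquivRange.symm ⟨A p, p, rfl⟩ = (LinearMap.ker A).mkQ p := by
      rw [LinearEquiv.symm_apply_eq]; rfl
    simp only [ℓ', LinearMap.comp_apply, LinearEquiv.coe_coe, this]
    simp
  obtain ⟨Λ, hΛ, hΛle⟩ := exists_extension_of_le_sublinear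
    ⟨LinearMap.range A, ℓ'⟩ (fun f : DomFun (X := X) ν => upperInt ν f.1)
    (fun c hc f => upperInt_smul f.2 hc) (fun f₁ f₂ => upperInt_add_le f₁.2 f₂.2)
    (by
      rintro ⟨_, p, rfl⟩
      exact (hℓ' p).trans_le (hle p))
  exact ⟨Λ, fun p => (hΛ ⟨A p, p, rfl⟩).trans (hℓ' p),
    fun f g hg hfg => (hΛle f).trans (upperInt_le f.2 hg hfg)⟩

end HahnBanach

/-! ### Convex order and suprema of affine functions -/

section ConvexOrder

variable {U : Type*} [NormedAddCommGroup U] [NormedSpace ℝ U] [MeasurableSpace U] [BorelSpace U]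

/-- Convex dominance transfers integrability: if `φ` were not `ζ`-integrable then neither would be
`φ - c`, so the dominance inequality for `φ - c` would read `0 ≤ ∫ φ dη - c`, which fails for
`c = ∫ φ dη + 1`. -/
lemma ConvexDomB.integrable {ζ η : Measure U} [IsProbabilityMeasure ζ] [IsProbabilityMeasure η]
    (h : ConvexDomB ζ η) {φ : U → ℝ} (hφ : LowerSemicontinuous φ) (hc : ConvexOn ℝ Set.univ φ)
    (hi : Integrable φ η) : Integrable φ ζ := by
  by_contra hn
  set c : ℝ := ∫ u, φ u ∂η + 1 with hcdef
  have hn' : ¬ Integrable (fun u => φ u - c) ζ := fun h' =>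
    hn ((h'.add (integrable_const c)).congr (.of_forall fun u => by simp))
  have key := h.2.2 (fun u => φ u - c)
    (by
      have := hφ.add (continuous_const (y := -c)).lowerSemicontinuous
      simpa [sub_eq_add_neg] using this)
    (hc.sub (concaveOn_const c convex_univ))
    (hi.sub (integrable_const c))
  rw [integral_undef hn', integral_sub hi (integrable_const c)] at key
  simp [hcdef] at key
  linarith

/-- A supremum of continuous affine functions with bounded slopes and intercepts is a finite, lower
semicontinuous, convex function of at most linear growth. -/
lemma supAffine_facts {X : Type*} [Nonempty X] {L : X → U →L[ℝ] ℝ} {k : X → ℝ} {a b : ℝ}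
    (hL : ∀ x, ‖L x‖ ≤ a) (hk : ∀ x, |k x| ≤ b) :
    (∀ x u, L x u + k x ≤ ⨆ x, (L x u + k x)) ∧
    LowerSemicontinuous (fun u => ⨆ x, (L x u + k x)) ∧
    ConvexOn ℝ Set.univ (fun u => ⨆ x, (L x u + k x)) ∧
    ∀ u, |⨆ x, (L x u + k x)| ≤ a * ‖u‖ + b := by
  have habs : ∀ x u, |L x u + k x| ≤ a * ‖u‖ + b := fun x u =>
    (abs_add_le _ _).trans (add_le_add (((L x).le_opNorm u).trans
      (mul_le_mul_of_nonneg_right (hL x) (norm_nonneg u))) (hk x))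
  have hbdd : ∀ u, BddAbove (Set.range fun x => L x u + k x) := fun u =>
    ⟨a * ‖u‖ + b, by rintro _ ⟨x, rfl⟩; exact (abs_le.1 (habs x u)).2⟩
  have hle : ∀ x u, L x u + k x ≤ ⨆ x, (L x u + k x) := fun x u => le_ciSup (hbdd u) x
  refine ⟨hle, ?_, ⟨convex_univ, ?_⟩, ?_⟩
  · exact lowerSemicontinuous_ciSup hbdd fun x =>
      ((L x).continuous.add continuous_const).lowerSemicontinuous
  · intro u _ v _ s t hs ht hst
    refine ciSup_le fun x => ?_
    have e : L x (s • u + t • v) + k x = s * (L x u + k x) + t * (L x v + k x) := by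
      simp only [map_add, map_smul, smul_eq_mul]
      linear_combination (-(k x)) * hst
    rw [e]
    exact add_le_add (mul_le_mul_of_nonneg_left (hle x u) hs)
      (mul_le_mul_of_nonneg_left (hle x v) ht)
  · intro u
    obtain ⟨x⟩ := ‹Nonempty X›
    exact abs_le.2 ⟨(abs_le.1 (habs x u)).1.trans (hle x u),
      haveI : Nonempty X := ⟨x⟩; ciSup_le fun x => (abs_le.1 (habs x u)).2⟩

end ConvexOrder

/-! ### Construction of the coupling on compact spaces -/

section Coupling

variable {K₁ K₂ : Type*} [TopologicalSpace K₁] [CompactSpace K₁] [PolishSpace K₁]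
  [MeasurableSpace K₁] [BorelSpace K₁]
  [TopologicalSpace K₂] [CompactSpace K₂] [PolishSpace K₂] [MeasurableSpace K₂] [BorelSpace K₂]
  {U : Type*} [NormedAddCommGroup U] [NormedSpace ℝ U] [CompleteSpace U]
  [SecondCountableTopology U] [MeasurableSpace U] [BorelSpace U]

lemma integrable_affine_comp {μ : Measure K₁} [IsProbabilityMeasure μ] {T : K₁ → U}
    (hTi : Integrable T μ) (L : C(K₁, U →L[ℝ] ℝ)) (k : C(K₁, ℝ)) :
    Integrable (fun x => L x (T x) + k x) μ := by
  have h1 : AEStronglyMeasurable (fun x => L x (T x)) μ :=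
    (ContinuousLinearMap.id ℝ (U →L[ℝ] ℝ)).aestronglyMeasurable_comp₂
      L.continuous.stronglyMeasurable.aestronglyMeasurable hTi.aestronglyMeasurable
  refine Integrable.mono' ((hTi.norm.const_mul ‖L‖).add (integrable_const ‖k‖))
    (h1.add k.continuous.stronglyMeasurable.aestronglyMeasurable) (.of_forall fun x => ?_)
  exact (norm_add_le _ _).trans (add_le_add (((L x).le_opNorm _).trans
    (mul_le_mul_of_nonneg_right (L.norm_coe_le_norm x) (norm_nonneg _))) (k.norm_coe_le_norm x))

/-- The inequality behind the Hahn-Banach step: if `L x (F y) + k x ≤ g y` for all `x, y`, insert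
the convex function `φ u = ⨆ x, (L x u + k x)` between the two integrals and use dominance. -/
lemma ConvexDomB.integral_le_majorant {μ : Measure K₁} [IsProbabilityMeasure μ]
    {ν : Measure K₂} [IsProbabilityMeasure ν] {T : K₁ → U} {F : K₂ → U} (hT : Measurable T)
    (hF : Measurable F) (hFi : Integrable F ν) (hTi : Integrable T μ)
    (hdom : ConvexDomB (μ.map T) (ν.map F))
    (L : C(K₁, U →L[ℝ] ℝ)) (k : C(K₁, ℝ)) {g : K₂ → ℝ} (hg : Integrable g ν)
    (hfg : ∀ x y, L x (F y) + k x ≤ g y) :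
    ∫ x, L x (T x) + k x ∂μ ≤ ∫ y, g y ∂ν := by
  have : Nonempty K₁ := nonempty_of_isProbabilityMeasure μ
  have := Measure.isProbabilityMeasure_map (μ := μ) hT.aemeasurable
  have := Measure.isProbabilityMeasure_map (μ := ν) hF.aemeasurable
  obtain ⟨hle, hlsc, hconv, habs⟩ := supAffine_facts (L := L) (k := k)
    (fun x => L.norm_coe_le_norm x) (fun x => k.norm_coe_le_norm x)
  set φ : U → ℝ := fun u => ⨆ x, (L x u + k x)
  have hφF : Integrable (fun y => φ (F y)) ν := by
    refine Integrable.mono' ((hFi.norm.const_mul ‖L‖).add (integrable_const ‖k‖))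
      (hlsc.measurable.comp hF).aestronglyMeasurable (.of_forall fun y => habs (F y))
  have hφη : Integrable φ (ν.map F) :=
    (integrable_map_measure hlsc.measurable.aestronglyMeasurable hF.aemeasurable).2 hφF
  have hφζ := hdom.integrable hlsc hconv hφη
  have hφT : Integrable (fun x => φ (T x)) μ :=
    (integrable_map_measure hlsc.measurable.aestronglyMeasurable hT.aemeasurable).1 hφζ
  have key := hdom.2.2 φ hlsc hconv hφη
  rw [integral_map hT.aemeasurable hlsc.measurable.aestronglyMeasurable,
    integral_map hF.aemeasurable hlsc.measurable.aestronglyMeasurable] at key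
  have hint := integrable_affine_comp hTi L k
  calc ∫ x, L x (T x) + k x ∂μ ≤ ∫ x, φ (T x) ∂μ := integral_mono hint hφT fun x => hle x (T x)
    _ ≤ ∫ y, φ (F y) ∂ν := key
    _ ≤ ∫ y, g y ∂ν := integral_mono hφF hg fun y =>
        haveI := ‹Nonempty K₁›; ciSup_le fun x => hfg x y

open scoped CompactlySupported in
/-- Riesz-Markov: on a compact product, a functional below the upper integral is represented on
continuous functions by a finite measure. -/
lemma exists_measure_of_functional {ν : Measure K₂} [IsProbabilityMeasure ν]
    (Λ : DomFun (X := K₁) ν →ₗ[ℝ] ℝ)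
    (hΛ : ∀ (f : DomFun (X := K₁) ν) (g : K₂ → ℝ), Integrable g ν →
      (∀ x y, f.1 (x, y) ≤ g y) → Λ f ≤ ∫ y, g y ∂ν) :
    ∃ σ : Measure (K₁ × K₂), IsFiniteMeasure σ ∧
      ∀ (f : C(K₁ × K₂, ℝ)) (hf : ⇑f ∈ DomFun ν), ∫ p, f p ∂σ = Λ ⟨f, hf⟩ := by
  have hmem : ∀ f : C_c(K₁ × K₂, ℝ), ⇑f ∈ DomFun (X := K₁) ν := fun f =>
    ⟨fun _ => ‖(f : C(K₁ × K₂, ℝ))‖, integrable_const _, fun x y =>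
      (f : C(K₁ × K₂, ℝ)).norm_coe_le_norm (x, y)⟩
  let Λ₀ : C_c(K₁ × K₂, ℝ) →ₗ[ℝ] ℝ :=
    { toFun := fun f => Λ ⟨f, hmem f⟩
      map_add' := fun f g => by rw [← map_add]; rfl
      map_smul' := fun c f => by rw [← map_smul]; rfl }
  let Λ' : C_c(K₁ × K₂, ℝ) →ₚ[ℝ] ℝ := PositiveLinearMap.mk₀ Λ₀ fun f hf => by
    have := hΛ (-⟨f, hmem f⟩) 0 (integrable_zero _ _ _) fun x y => by
      have : 0 ≤ f (x, y) := hf (x, y)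
      simpa using this
    have h0 : 0 ≤ Λ ⟨f, hmem f⟩ := by simpa using this
    exact h0
  have hfin : IsFiniteMeasure (RealRMK.rieszMeasure Λ') := by
    infer_instance
  refine ⟨RealRMK.rieszMeasure Λ', hfin, fun f hf => ?_⟩
  exact RealRMK.integral_rieszMeasure Λ' ⟨f, HasCompactSupport.of_compactSpace f⟩

/-- A coupling `σ` of `μ` and `ν` under which `F` has the conditional mean `T`, in weak form. The
Hahn-Banach step is applied to the functions `(x, y) ↦ L x (F y) + k x` with the prescribed value
`∫ (L x (T x) + k x) dμ`. The choice `L = 0` gives the first marginal, and `L x = k x • l` gives the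
conditional mean. -/
lemma exists_coupling {μ : Measure K₁} [IsProbabilityMeasure μ]
    {ν : Measure K₂} [IsProbabilityMeasure ν] {T : K₁ → U} {F : K₂ → U} (hT : Measurable T)
    (hF : Measurable F) (hFi : Integrable F ν) (hTi : Integrable T μ)
    (hdom : ConvexDomB (μ.map T) (ν.map F)) :
    ∃ σ : Measure (K₁ × K₂), IsProbabilityMeasure σ ∧ σ.fst = μ ∧ σ.snd = ν ∧
      ∀ (k : C(K₁, ℝ)) (l : U →L[ℝ] ℝ),
        ∫ p, k p.1 * l (F p.2) ∂σ = ∫ x, k x * l (T x) ∂μ := by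
  have : Nonempty K₁ := nonempty_of_isProbabilityMeasure μ
  let A : (C(K₁, U →L[ℝ] ℝ) × C(K₁, ℝ)) →ₗ[ℝ] DomFun (X := K₁) ν :=
    { toFun := fun p => ⟨fun q => p.1 q.1 (F q.2) + p.2 q.1,
        ⟨fun y => ‖p.1‖ * ‖F y‖ + ‖p.2‖, (hFi.norm.const_mul _).add (integrable_const _),
          fun x y => (abs_add_le _ _).trans (add_le_add (((p.1 x).le_opNorm _).trans
            (mul_le_mul_of_nonneg_right (p.1.norm_coe_le_norm x) (norm_nonneg _)))
            (p.2.norm_coe_le_norm x))⟩⟩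
      map_add' := fun p q => by
        ext z; simp; ring
      map_smul' := fun c p => by
        ext z; simp; ring }
  let ℓ : (C(K₁, U →L[ℝ] ℝ) × C(K₁, ℝ)) →ₗ[ℝ] ℝ :=
    { toFun := fun p => ∫ x, p.1 x (T x) + p.2 x ∂μ
      map_add' := fun p q => by
        rw [← integral_add (integrable_affine_comp hTi p.1 p.2)
          (integrable_affine_comp hTi q.1 q.2)]
        refine integral_congr_ae (.of_forall fun x => ?_)
        simp; ring
      map_smul' := fun c p => by
        rw [smul_eq_mul, RingHom.id_apply, ← integral_const_mul]
        refine integral_congr_ae (.of_forall fun x => ?_)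
        simp; ring }
  obtain ⟨Λ, hΛA, hΛ⟩ := exists_functional_le_upperInt A ℓ fun p g hg hfg =>
    hdom.integral_le_majorant hT hF hFi hTi p.1 p.2 hg hfg
  have hΛ' : ∀ (f : DomFun (X := K₁) ν) (g : K₂ → ℝ), Integrable g ν →
      (∀ x y, |f.1 (x, y)| ≤ g y) → |Λ f| ≤ ∫ y, g y ∂ν := fun f g hg hfg => by
    refine abs_le'.2 ⟨hΛ f g hg fun x y => (le_abs_self _).trans (hfg x y), ?_⟩
    rw [← map_neg]
    exact hΛ (-f) g hg fun x y => (neg_le_abs _).trans (hfg x y)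
  have hΛsnd : ∀ (b : K₂ → ℝ) (hb : Integrable b ν)
      (hf : (fun q : K₁ × K₂ => b q.2) ∈ DomFun ν), Λ ⟨_, hf⟩ = ∫ y, b y ∂ν := by
    intro b hb hf
    refine le_antisymm (hΛ _ b hb fun x y => le_rfl) ?_
    have := hΛ (-⟨_, hf⟩) (-b) hb.neg fun x y => le_rfl
    rw [map_neg] at this
    simp only [Pi.neg_apply, integral_neg] at this
    linarith
  obtain ⟨σ, hσfin, hσ⟩ := exists_measure_of_functional Λ hΛ
  have hsnd : σ.snd = ν := by
    refine ext_of_forall_integral_eq_of_IsFiniteMeasure fun b => ?_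
    rw [Measure.snd, integral_map measurable_snd.aemeasurable
      b.continuous.stronglyMeasurable.aestronglyMeasurable]
    have hbi : Integrable b ν := b.integrable ν
    have hf : (fun q : K₁ × K₂ => b q.2) ∈ DomFun ν :=
      ⟨fun y => |b y|, hbi.abs, fun x y => le_rfl⟩
    rw [← hΛsnd b hbi hf]
    exact hσ ⟨fun q => b q.2, by fun_prop⟩ hf
  have hσp : IsProbabilityMeasure σ := by
    constructor
    have := measure_univ (μ := ν)
    rwa [← hsnd, Measure.snd_univ] at this
  have hfst : σ.fst = μ := by
    refine ext_of_forall_integral_eq_of_IsFiniteMeasure fun b => ?_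
    rw [Measure.fst, integral_map measurable_fst.aemeasurable
      b.continuous.stronglyMeasurable.aestronglyMeasurable]
    have h0 := hΛA (0, b.toContinuousMap)
    have e : (A (0, b.toContinuousMap)).1 = fun q : K₁ × K₂ => b q.1 := by
      ext q; simp [A]
    have hf : (fun q : K₁ × K₂ => b q.1) ∈ DomFun ν := e ▸ (A (0, b.toContinuousMap)).2
    have e' : A (0, b.toContinuousMap) = ⟨_, hf⟩ := Subtype.ext e
    rw [e'] at h0
    rw [show ∫ x, b x ∂μ = ℓ (0, b.toContinuousMap) by simp [ℓ], ← h0]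
    exact hσ ⟨fun q => b q.1, by fun_prop⟩ hf
  -- On products `k ⊗ b` with `b` merely integrable, `Λ` is integration against `σ`: both sides
  -- change by at most `‖k‖ ∫ |b - b'| dν` when `b` is replaced by a bounded continuous `b'`.
  have hprod : ∀ (k : C(K₁, ℝ)) (b : K₂ → ℝ), Integrable b ν →
      ∀ hf : (fun q : K₁ × K₂ => k q.1 * b q.2) ∈ DomFun ν,
        ∫ q, k q.1 * b q.2 ∂σ = Λ ⟨_, hf⟩ := by
    intro k b hb hf
    have hint : ∀ c : K₂ → ℝ, Integrable c ν → Integrable (fun q => k q.1 * c q.2) σ := by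
      intro c hc
      have hc' : Integrable (fun q : K₁ × K₂ => c q.2) σ := by
        rw [← hsnd] at hc
        exact hc.comp_measurable measurable_snd
      exact hc'.bdd_mul (c := ‖k‖) (by
        exact (k.continuous.comp continuous_fst).stronglyMeasurable.aestronglyMeasurable)
        (.of_forall fun q => k.norm_coe_le_norm q.1)
    refine eq_of_forall_dist_le fun ε hε => ?_
    obtain ⟨b', hb', hb'i⟩ := hb.exists_boundedContinuous_integral_sub_le
      (ε := ε / (2 * (‖k‖ + 1))) (by positivity)
    have hmem : ∀ c : K₂ → ℝ, Integrable c ν →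
        (fun q : K₁ × K₂ => k q.1 * c q.2) ∈ DomFun ν := fun c hc =>
      ⟨fun y => ‖k‖ * |c y|, hc.abs.const_mul _, fun x y => by
        rw [abs_mul]
        exact mul_le_mul_of_nonneg_right (k.norm_coe_le_norm x) (abs_nonneg _)⟩
    have hd : Integrable (fun y => b y - b' y) ν := hb.sub hb'i
    have hcont : ∫ q, k q.1 * b' q.2 ∂σ = Λ ⟨_, hmem b' hb'i⟩ :=
      hσ ⟨fun q => k q.1 * b' q.2, by fun_prop⟩ _
    have hI : ‖k‖ * ∫ y, |b y - b' y| ∂ν ≤ ε / 2 := by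
      calc ‖k‖ * ∫ y, |b y - b' y| ∂ν ≤ (‖k‖ + 1) * (ε / (2 * (‖k‖ + 1))) :=
            mul_le_mul (by linarith) hb' (integral_nonneg fun _ => abs_nonneg _) (by positivity)
        _ = ε / 2 := by field_simp
    have h1 : |∫ q, k q.1 * b q.2 ∂σ - ∫ q, k q.1 * b' q.2 ∂σ| ≤ ε / 2 := by
      rw [← integral_sub (hint b hb) (hint b' hb'i)]
      refine le_trans (abs_integral_le_integral_abs.trans ?_) hI
      rw [← integral_const_mul, ← hsnd, Measure.snd, integral_map measurable_snd.aemeasurable (by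
        have := (hd.abs.const_mul ‖k‖).aestronglyMeasurable
        rwa [← hsnd] at this)]
      refine integral_mono_of_nonneg (.of_forall fun _ => abs_nonneg _) ?_
        (.of_forall fun q => ?_)
      · have := hd.abs.const_mul ‖k‖
        rw [← hsnd] at this
        exact this.comp_measurable measurable_snd
      · simp only [← mul_sub, abs_mul]
        exact mul_le_mul_of_nonneg_right (k.norm_coe_le_norm q.1) (abs_nonneg _)
    have h2 : |Λ ⟨_, hmem b' hb'i⟩ - Λ ⟨_, hf⟩| ≤ ε / 2 := by
      rw [← map_sub]
      refine le_trans (hΛ' _ (fun y => ‖k‖ * |b y - b' y|) (hd.abs.const_mul _)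
        fun x y => ?_) ((integral_const_mul _ _).trans_le hI)
      change |k x * b' y - k x * b y| ≤ _
      rw [← mul_sub, abs_mul, abs_sub_comm (b' y)]
      exact mul_le_mul_of_nonneg_right (k.norm_coe_le_norm x) (abs_nonneg _)
    rw [hcont] at h1
    calc _ ≤ _ := dist_triangle _ (Λ ⟨_, hmem b' hb'i⟩) _
      _ ≤ ε / 2 + ε / 2 := add_le_add h1 h2
      _ = ε := by ring
  refine ⟨σ, hσp, hfst, hsnd, fun k l => ?_⟩
  have hL : Continuous fun x => k x • l := by fun_prop
  have h0 := hΛA (⟨fun x => k x • l, hL⟩, 0)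
  have e : (A (⟨fun x => k x • l, hL⟩, 0)).1 = fun q : K₁ × K₂ => k q.1 * l (F q.2) := by
    ext q; simp [A]
  have hf : (fun q : K₁ × K₂ => k q.1 * l (F q.2)) ∈ DomFun ν := e ▸ (A _).2
  have e' : A (⟨fun x => k x • l, hL⟩, 0) = ⟨_, hf⟩ := Subtype.ext e
  rw [e'] at h0
  rw [hprod k (fun y => l (F y)) (l.integrable_comp hFi) hf, h0]
  simp [ℓ]

end Coupling

/-! ### Disintegration of the coupling -/

section Kernel

open ProbabilityTheory Filter Topology

variable {X Y : Type*} [MeasurableSpace X] [MeasurableSpace Y]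
  {U : Type*} [NormedAddCommGroup U] [NormedSpace ℝ U] [CompleteSpace U]

/-- Integrable Banach-valued maps are determined a.e. by their integrals against continuous real
weights and functionals; weights decreasing to the indicator of a closed set suffice. -/
lemma ae_eq_of_forall_integral_mul_eq {K : Type*} [TopologicalSpace K] [MeasurableSpace K]
    [BorelSpace K] [HasOuterApproxClosed K] {μ : Measure K} [IsProbabilityMeasure μ]
    {S T : K → U} (hS : Integrable S μ) (hT : Integrable T μ)
    (h : ∀ (k : C(K, ℝ)) (l : U →L[ℝ] ℝ), ∫ x, k x * l (S x) ∂μ = ∫ x, k x * l (T x) ∂μ) :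
    S =ᵐ[μ] T := by
  suffices hz : S - T =ᵐ[μ] 0 by
    filter_upwards [hz] with x hx using sub_eq_zero.1 hx
  refine ae_eq_zero_of_forall_setIntegral_isClosed_eq_zero (hS.sub hT) fun C hC => ?_
  refine (SeparatingDual.eq_iff_forall_dual_eq (R := ℝ)).2 fun l => ?_
  have hST : Integrable (fun x => l (S x - T x)) μ := l.integrable_comp (hS.sub hT)
  rw [map_zero, ← l.integral_comp_comm (hS.sub hT).integrableOn]
  have hlim : Tendsto (fun n => ∫ x, (hC.apprSeq n x : ℝ) * l (S x - T x) ∂μ) atTop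
      (𝓝 (∫ x, C.indicator (fun x => l (S x - T x)) x ∂μ)) := by
    refine tendsto_integral_of_dominated_convergence (fun x => |l (S x - T x)|)
      (fun n => ?_) hST.abs (fun n => .of_forall fun x => ?_) (.of_forall fun x => ?_)
    · exact (Continuous.aestronglyMeasurable (by fun_prop)).mul hST.aestronglyMeasurable
    · rw [norm_mul]
      refine mul_le_of_le_one_left (abs_nonneg _) ?_
      simpa using HasOuterApproxClosed.apprSeq_apply_le_one hC n x
    · have h1 : Tendsto (fun n => hC.apprSeq n x) atTop (𝓝 (C.indicator (fun _ => 1) x)) :=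
        tendsto_pi_nhds.1 (HasOuterApproxClosed.tendsto_apprSeq hC) x
      have h2 : Tendsto (fun n => (hC.apprSeq n x : ℝ)) atTop _ :=
        (NNReal.continuous_coe.tendsto _).comp h1
      have h3 := h2.mul_const (l (S x - T x))
      convert h3 using 2
      by_cases hx : x ∈ C <;> simp [hx]
  have hzero : ∀ n, ∫ x, (hC.apprSeq n x : ℝ) * l (S x - T x) ∂μ = 0 := fun n => by
    have hi : ∀ R : K → U, Integrable R μ →
        Integrable (fun x => (hC.apprSeq n x : ℝ) * l (R x)) μ := fun R hR =>
      (l.integrable_comp hR).bdd_mul (c := 1) (Continuous.aestronglyMeasurable (by fun_prop))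
        (.of_forall fun x => by simpa using HasOuterApproxClosed.apprSeq_apply_le_one hC n x)
    have := h ⟨fun x => (hC.apprSeq n x : ℝ), by fun_prop⟩ l
    simp only [ContinuousMap.coe_mk] at this
    simp only [map_sub, mul_sub]
    rw [integral_sub (hi S hS) (hi T hT), this, sub_self]
  simp only [hzero, integral_indicator hC.measurableSet] at hlim
  exact (tendsto_nhds_unique hlim tendsto_const_nhds)

/-- Fubini for a function of the second variable: fibrewise integrability, integrability of the
fibre integrals, and their total integral. -/
lemma compProd_snd_facts {V : Type*} [NormedAddCommGroup V] [NormedSpace ℝ V]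
    {μ : Measure X} [IsProbabilityMeasure μ] {κ : Kernel X Y} [IsMarkovKernel κ]
    {f : Y → V} (hf : StronglyMeasurable f) (hfi : Integrable f (μ ⊗ₘ κ).snd) :
    Integrable (fun p : X × Y => f p.2) (μ ⊗ₘ κ) ∧ (∀ᵐ x ∂μ, Integrable f (κ x)) ∧
      Integrable (fun x => ∫ y, f y ∂κ x) μ ∧
      ∫ x, ∫ y, f y ∂κ x ∂μ = ∫ y, f y ∂(μ ⊗ₘ κ).snd := by
  have h1 : Integrable (fun p : X × Y => f p.2) (μ ⊗ₘ κ) := hfi.comp_measurable measurable_snd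
  have h2 := (Measure.integrable_compProd_iff h1.aestronglyMeasurable).1 h1
  refine ⟨h1, h2.1, ?_, ?_⟩
  · exact h2.2.mono' hf.integral_kernel.aestronglyMeasurable
      (.of_forall fun x => norm_integral_le_integral_norm _)
  · rw [Measure.snd, integral_map measurable_snd.aemeasurable hf.aestronglyMeasurable,
      Measure.integral_compProd h1]

end Kernel

section Disintegration

open ProbabilityTheory

variable {U : Type*} [NormedAddCommGroup U] [NormedSpace ℝ U] [CompleteSpace U]
  [SecondCountableTopology U] [MeasurableSpace U] [BorelSpace U]

/-- Disintegrating the coupling over compact spaces: its conditional measures integrate `F` to `T`. -/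
lemma exists_kernel_of_compact
    {K₁ K₂ : Type*} [TopologicalSpace K₁] [CompactSpace K₁] [PolishSpace K₁]
    [MeasurableSpace K₁] [BorelSpace K₁]
    [TopologicalSpace K₂] [CompactSpace K₂] [PolishSpace K₂] [MeasurableSpace K₂] [BorelSpace K₂]
    {μ : Measure K₁} [IsProbabilityMeasure μ]
    {ν : Measure K₂} [IsProbabilityMeasure ν] {T : K₁ → U} {F : K₂ → U} (hT : Measurable T)
    (hF : Measurable F) (hFi : Integrable F ν) (hTi : Integrable T μ)
    (hdom : ConvexDomB (μ.map T) (ν.map F)) :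
    ∃ κ : Kernel K₁ K₂, IsMarkovKernel κ ∧ (μ ⊗ₘ κ).snd = ν ∧
      ∀ᵐ x ∂μ, ∫ y, F y ∂κ x = T x := by
  have : Nonempty K₂ := nonempty_of_isProbabilityMeasure ν
  obtain ⟨σ, hσ, hfst, hsnd, hkl⟩ := exists_coupling hT hF hFi hTi hdom
  obtain ⟨κ, hκ, rfl⟩ : ∃ κ : Kernel K₁ K₂, IsMarkovKernel κ ∧ μ ⊗ₘ κ = σ :=
    ⟨σ.condKernel, inferInstance, by rw [← hfst]; exact σ.disintegrate σ.condKernel⟩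
  refine ⟨κ, hκ, hsnd, ?_⟩
  obtain ⟨h1, h2, h3, -⟩ := compProd_snd_facts hF.stronglyMeasurable (by rwa [hsnd])
  refine ae_eq_of_forall_integral_mul_eq h3 hTi fun k l => ?_
  rw [← hkl, Measure.integral_compProd]
  · refine integral_congr_ae ?_
    filter_upwards [h2] with x hx
    rw [integral_const_mul, l.integral_comp_comm hx]
  · exact (l.integrable_comp h1).bdd_mul (c := ‖k‖)
      (k.continuous.comp continuous_fst).stronglyMeasurable.aestronglyMeasurable
      (.of_forall fun q => k.norm_coe_le_norm q.1)

/-- The same statement on standard Borel spaces. Both spaces embed measurably into the Cantor space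
`ℕ → Bool`, and the kernel found there is pulled back along the embedding of `X` and pushed forward
by a measurable left inverse of the embedding of `Y`. -/
lemma exists_kernel_of_convexDomB
    {X Y : Type*} [MeasurableSpace X] [StandardBorelSpace X]
    [MeasurableSpace Y] [StandardBorelSpace Y]
    {μ : Measure X} [IsProbabilityMeasure μ]
    {ν : Measure Y} [IsProbabilityMeasure ν] {T : X → U} {F : Y → U} (hT : Measurable T)
    (hF : Measurable F) (hFi : Integrable F ν) (hTi : Integrable T μ)
    (hdom : ConvexDomB (μ.map T) (ν.map F)) :
    ∃ κ : Kernel X Y, IsMarkovKernel κ ∧ (μ ⊗ₘ κ).snd = ν ∧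
      ∀ᵐ x ∂μ, ∫ y, F y ∂κ x = T x := by
  have : Nonempty X := nonempty_of_isProbabilityMeasure μ
  have : Nonempty Y := nonempty_of_isProbabilityMeasure ν
  have : PolishSpace (ℕ → Bool) := by
    have : TopologicalSpace.IsCompletelyMetrizableSpace (ℕ → Bool) := inferInstance
    infer_instance
  have he₁ : MeasurableEmbedding (MeasurableSpace.mapNatBool X) :=
    (MeasurableSpace.measurable_mapNatBool X).measurableEmbedding
      (MeasurableSpace.injective_mapNatBool X)
  have he₂ : MeasurableEmbedding (MeasurableSpace.mapNatBool Y) :=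
    (MeasurableSpace.measurable_mapNatBool Y).measurableEmbedding
      (MeasurableSpace.injective_mapNatBool Y)
  set e₁ := MeasurableSpace.mapNatBool X
  set e₂ := MeasurableSpace.mapNatBool Y
  have hr₁ := he₁.leftInverse_invFun
  have hr₂ := he₂.leftInverse_invFun
  have hm₁ := he₁.measurable_invFun
  have hm₂ := he₂.measurable_invFun
  set r₁ := he₁.invFun
  set r₂ := he₂.invFun
  have := Measure.isProbabilityMeasure_map (μ := μ) he₁.measurable.aemeasurable
  have := Measure.isProbabilityMeasure_map (μ := ν) he₂.measurable.aemeasurable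
  have hT' : (T ∘ r₁) ∘ e₁ = T := by funext x; simp [hr₁ x]
  have hF' : (F ∘ r₂) ∘ e₂ = F := by funext x; simp [hr₂ x]
  obtain ⟨κ, hκ, hsnd, hbar⟩ := exists_kernel_of_compact (μ := μ.map e₁) (ν := ν.map e₂)
    (T := T ∘ r₁) (F := F ∘ r₂) (hT.comp hm₁) (hF.comp hm₂)
    (by rwa [he₂.integrable_map_iff, hF']) (by rwa [he₁.integrable_map_iff, hT'])
    (by
      rw [Measure.map_map (hT.comp hm₁) he₁.measurable, Measure.map_map (hF.comp hm₂)
        he₂.measurable, hT', hF']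
      exact hdom)
  have hκ' : IsMarkovKernel ((κ.comap e₁ he₁.measurable).map r₂) :=
    Kernel.IsMarkovKernel.map _ hm₂
  refine ⟨(κ.comap e₁ he₁.measurable).map r₂, hκ', ?_, ?_⟩
  · have hνr : (ν.map e₂).map r₂ = ν := by
      rw [Measure.map_map hm₂ he₂.measurable, hr₂.comp_eq_id, Measure.map_id]
    conv_rhs => rw [← hνr, ← hsnd]
    ext s hs
    rw [Measure.snd_apply hs, Measure.compProd_apply (measurable_snd hs),
      Measure.map_apply hm₂ hs, Measure.snd_apply (hm₂ hs),
      Measure.compProd_apply (measurable_snd (hm₂ hs)), he₁.lintegral_map]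
    refine lintegral_congr fun x => ?_
    change (κ.comap e₁ he₁.measurable).map r₂ x s = κ (e₁ x) (r₂ ⁻¹' s)
    rw [Kernel.map_apply _ hm₂, Kernel.comap_apply, Measure.map_apply hm₂ hs]
  · have := he₁.ae_map_iff.1 hbar
    filter_upwards [this] with x hx
    rw [Kernel.map_apply _ hm₂, Kernel.comap_apply,
      integral_map hm₂.aemeasurable hF.stronglyMeasurable.aestronglyMeasurable]
    simpa [hr₁ x] using hx

end Disintegration

/-! ### Jensen's inequality -/

section Jensen

open ProbabilityTheory

variable {X Y : Type*} [MeasurableSpace X] [MeasurableSpace Y]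
  {U : Type*} [NormedAddCommGroup U] [NormedSpace ℝ U] [CompleteSpace U]

/-- Jensen's inequality for lower semicontinuous convex functions on a Banach space, as conditional
Jensen for the trivial σ-algebra. -/
lemma ConvexOn.map_integral_le_of_lowerSemicontinuous {m : Measure Y} [IsProbabilityMeasure m]
    {F : Y → U} {φ : U → ℝ} (hc : ConvexOn ℝ Set.univ φ) (hφ : LowerSemicontinuous φ)
    (hF : Integrable F m) (hφF : Integrable (fun y => φ (F y)) m) :
    φ (∫ y, F y ∂m) ≤ ∫ y, φ (F y) ∂m := by
  have h := hc.map_condExp_le_univ (m := ⊥) (μ := m) bot_le hφ hF hφF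
  rw [condExp_bot, condExp_bot] at h
  obtain ⟨y, hy⟩ := h.exists
  exact hy

/-- Fibrewise Jensen: the law of `x ↦ ∫ F dκ_x` is convexly dominated by the law of `F`. -/
lemma convexDomB_integral_kernel [SecondCountableTopology U] [MeasurableSpace U] [BorelSpace U]
    {μ : Measure X} [IsProbabilityMeasure μ] {κ : Kernel X Y} [IsMarkovKernel κ]
    {F : Y → U} (hF : Measurable F) (hFi : Integrable F (μ ⊗ₘ κ).snd) :
    ConvexDomB (μ.map fun x => ∫ y, F y ∂κ x) ((μ ⊗ₘ κ).snd.map F) := by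
  have hT : Measurable fun x => ∫ y, F y ∂κ x :=
    hF.stronglyMeasurable.integral_kernel.measurable
  obtain ⟨-, hae, hTi, hTint⟩ := compProd_snd_facts hF.stronglyMeasurable hFi
  have hbar : ∀ l : U →L[ℝ] ℝ, l (∫ y, F y ∂(μ ⊗ₘ κ).snd) = ∫ u, l u ∂(μ ⊗ₘ κ).snd.map F :=
    fun l => by
      rw [integral_map hF.aemeasurable l.continuous.stronglyMeasurable.aestronglyMeasurable,
        l.integral_comp_comm hFi]
  refine ⟨⟨∫ y, F y ∂(μ ⊗ₘ κ).snd, fun l => ?_⟩, ⟨_, hbar⟩, fun φ hφ hc hi => ?_⟩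
  · rw [integral_map hT.aemeasurable l.continuous.stronglyMeasurable.aestronglyMeasurable,
      l.integral_comp_comm hTi, hTint]
  · have hφm : Measurable φ := hφ.measurable
    have hφF : Integrable (fun y => φ (F y)) (μ ⊗ₘ κ).snd :=
      (integrable_map_measure hφm.aestronglyMeasurable hF.aemeasurable).1 hi
    rw [integral_map hT.aemeasurable hφm.aestronglyMeasurable,
      integral_map hF.aemeasurable hφm.aestronglyMeasurable]
    obtain ⟨-, hae', hTi', hTint'⟩ :=
      compProd_snd_facts (hφm.comp hF).stronglyMeasurable hφF
    have hjensen : ∀ᵐ x ∂μ, φ (∫ y, F y ∂κ x) ≤ ∫ y, φ (F y) ∂κ x := by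
      filter_upwards [hae, hae'] with x hx hx'
      exact hc.map_integral_le_of_lowerSemicontinuous hφ hx hx'
    -- `φ ∘ T` lies between the fibre integrals of `φ ∘ F` and an affine minorant of `φ`.
    obtain ⟨l, c, hlc, -⟩ := ConvexOn.exists_affine_le_of_lt (𝕜 := ℝ) (Set.mem_univ (0 : U))
      (sub_one_lt (φ 0)) isClosed_univ (lowerSemicontinuousOn_univ_iff.2 hφ) hc
    have hlc' : ∀ u, l u + c ≤ φ u := fun u => by simpa using hlc ⟨u, Set.mem_univ u⟩
    have hlow : Integrable (fun x => l (∫ y, F y ∂κ x) + c) μ :=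
      (l.integrable_comp hTi).add (integrable_const c)
    have hφT : Integrable (fun x => φ (∫ y, F y ∂κ x)) μ := by
      refine (hlow.abs.add hTi'.abs).mono' (hφm.comp hT).aestronglyMeasurable ?_
      filter_upwards [hjensen] with x hx
      refine abs_le.2 ⟨?_, ?_⟩
      · have h1 := neg_abs_le (l (∫ y, F y ∂κ x) + c)
        have h2 := abs_nonneg (∫ y, φ (F y) ∂κ x)
        have h3 := hlc' (∫ y, F y ∂κ x)
        simp only [Pi.add_apply, Function.comp_apply] at *
        linarith
      · have h1 := le_abs_self (∫ y, φ (F y) ∂κ x)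
        have h2 := abs_nonneg (l (∫ y, F y ∂κ x) + c)
        simp only [Pi.add_apply, Function.comp_apply] at *
        linarith
    exact (integral_mono_ae hφT hTi' hjensen).trans_eq hTint'

end Jensen

/-! ### Passing between couplings and maps -/

section Values

open ProbabilityTheory

variable {X Y : Type*} [MeasurableSpace X] [StandardBorelSpace X]
  [MeasurableSpace Y] [StandardBorelSpace Y] [Nonempty Y]
  {U : Type*} [NormedAddCommGroup U] [NormedSpace ℝ U] [CompleteSpace U]
  [SecondCountableTopology U] [MeasurableSpace U] [BorelSpace U]
  {μ : Measure X} [IsProbabilityMeasure μ] {ν : Measure Y} [IsProbabilityMeasure ν] {F : Y → U}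

/-- From the Kantorovich side to the Monge side: `x ↦ g(σ^x)` is an admissible map. -/
lemma measurable_and_convexDomB_of_coupling (hF : Measurable F) (hFi : Integrable F ν)
    {σ : ProbabilityMeasure (X × Y)} (hfst : (σ : Measure (X × Y)).map Prod.fst = μ)
    (hsnd : (σ : Measure (X × Y)).map Prod.snd = ν) :
    Measurable (fun x => ∫ y, F y ∂(condMeas σ x)) ∧
      ConvexDomB (μ.map fun x => ∫ y, F y ∂(condMeas σ x)) (ν.map F) := by
  have hdis : μ ⊗ₘ (σ : Measure (X × Y)).condKernel = σ := by
    conv_lhs => rw [← hfst]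
    exact (σ : Measure (X × Y)).disintegrate _
  have hsnd' : (μ ⊗ₘ (σ : Measure (X × Y)).condKernel).snd = ν := by rw [hdis]; exact hsnd
  have hdom := convexDomB_integral_kernel (μ := μ) (κ := (σ : Measure (X × Y)).condKernel)
    hF (by rwa [hsnd'])
  rw [hsnd'] at hdom
  exact ⟨hF.stronglyMeasurable.integral_kernel.measurable, hdom⟩

/-- From the Monge side to the Kantorovich side: an admissible map `T` is `μ`-a.e. of the form
`x ↦ g(σ^x)`. Dominance applied to the norm shows first that `T` is `μ`-integrable. -/
lemma exists_coupling_of_convexDomB (hF : Measurable F) (hFi : Integrable F ν)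
    {T : X → U} (hT : Measurable T) (hdom : ConvexDomB (μ.map T) (ν.map F)) :
    ∃ σ : ProbabilityMeasure (X × Y), ((σ : Measure (X × Y)).map Prod.fst = μ ∧
      (σ : Measure (X × Y)).map Prod.snd = ν) ∧
      ∀ᵐ x ∂μ, ∫ y, F y ∂(condMeas σ x) = T x := by
  have := Measure.isProbabilityMeasure_map (μ := μ) hT.aemeasurable
  have := Measure.isProbabilityMeasure_map (μ := ν) hF.aemeasurable
  have hTi : Integrable T μ := by
    have hη : Integrable (fun u : U => ‖u‖) (ν.map F) :=
      (integrable_map_measure continuous_norm.stronglyMeasurable.aestronglyMeasurable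
        hF.aemeasurable).2 hFi.norm
    have hζ := hdom.integrable continuous_norm.lowerSemicontinuous convexOn_univ_norm hη
    rw [integrable_map_measure continuous_norm.stronglyMeasurable.aestronglyMeasurable
      hT.aemeasurable] at hζ
    exact (integrable_norm_iff hT.stronglyMeasurable.aestronglyMeasurable).1 hζ
  obtain ⟨κ, hκ, hsnd, hbar⟩ := exists_kernel_of_convexDomB hT hF hFi hTi hdom
  have hfst : (μ ⊗ₘ κ).fst = μ := Measure.fst_compProd μ κ
  have hcond : ∀ᵐ x ∂μ, κ x = (μ ⊗ₘ κ).condKernel x := by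
    have := eq_condKernel_of_measure_eq_compProd (ρ := μ ⊗ₘ κ) κ (by rw [hfst])
    rwa [hfst] at this
  refine ⟨⟨μ ⊗ₘ κ, inferInstance⟩, ⟨hfst, hsnd⟩, ?_⟩
  filter_upwards [hbar, hcond] with x hx hx'
  change ∫ y, F y ∂((μ ⊗ₘ κ).condKernel x) = T x
  rw [← hx', hx]

end Values

/-- **Infinite-dimensional case: the nonlinear Kantorovich problem with cost
`h(x, g(σ^x))`, `g(p) = ∫ F dp` (Bochner integral), and the Monge problem with convex
dominance have equal infima.** Let `X, Y` be Polish spaces, `μ, ν` Borel probability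
measures, `U` a separable Banach space, `F : Y → U` Borel measurable with
`∫ ‖F‖ dν < ∞`, and `h : X × U → ℝ` Borel measurable. Then the infimum of
`σ ↦ ∫_X h(x, g(σ^x)) dμ` over `Π(μ,ν)` equals the infimum of `T ↦ ∫_X h(x, T(x)) dμ`
over all Borel maps `T : X → U` with `μ∘T⁻¹ ≼_c ν∘F⁻¹`. -/
theorem inf_nonlinear_kantorovich_eq_inf_monge_convexDom_banach
    {X Y : Type*} [MeasurableSpace X] [TopologicalSpace X] [PolishSpace X] [BorelSpace X]
    [MeasurableSpace Y] [TopologicalSpace Y] [PolishSpace Y] [BorelSpace Y] [Nonempty Y]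
    (μ : Measure X) [IsProbabilityMeasure μ] (ν : Measure Y) [IsProbabilityMeasure ν]
    {U : Type*} [NormedAddCommGroup U] [NormedSpace ℝ U] [CompleteSpace U]
    [TopologicalSpace.SeparableSpace U] [MeasurableSpace U] [BorelSpace U]
    (F : Y → U) (hFmeas : Measurable F)
    (hFint : Integrable F ν)
    (h : X → U → ℝ) (hh : Measurable (fun q : X × U => h q.1 q.2)) :
    (⨅ σ : {σ : ProbabilityMeasure (X × Y) //
        (σ : Measure (X × Y)).map Prod.fst = μ ∧ (σ : Measure (X × Y)).map Prod.snd = ν},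
      ∫ x, h x (∫ y, F y ∂(condMeas σ.1 x)) ∂μ) =
    (⨅ T : {T : X → U // Measurable T ∧ ConvexDomB (μ.map T) (ν.map F)},
      ∫ x, h x (T.1 x) ∂μ) := by
  have : SecondCountableTopology U := UniformSpace.secondCountable_of_separable U
  -- The two families take the same set of values, so no boundedness below is involved.
  refine congrArg sInf (Set.ext fun r => ⟨?_, ?_⟩)
  · rintro ⟨⟨σ, hfst, hsnd⟩, rfl⟩
    exact ⟨⟨_, measurable_and_convexDomB_of_coupling hFmeas hFint hfst hsnd⟩, rfl⟩
  · rintro ⟨⟨T, hT, hdom⟩, rfl⟩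
    obtain ⟨σ, hσ, hbar⟩ := exists_coupling_of_convexDomB hFmeas hFint hT hdom
    refine ⟨⟨σ, hσ⟩, integral_congr_ae ?_⟩
    filter_upwards [hbar] with x hx
    exact congrArg (h x) hx
end
end
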